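/- arXiv:1607.07667 — 3 statements merged into one kernel-verified Lean document; each statement's English description precedes it below -/
import Mathlib

section
/- Let A_g (g ≥ 2, n ≥ 2) be the quotient of H*(Σ_g^{×n}; ℚ) by the ideal generated by all products x_i(p)x_j(q), x_i(p)y_j(q), y_i(p)y_j(q) with p, q ∈ {2,…,g} and i ≠ j. Then an additive (ℚ-vector space) basis of A_g is given by the images of the monomials u_1⋯u_n such that (i) each u_i ∈ {1, a_i(p), b_i(p), ω_i : 1 ≤ p ≤ g}, and (ii) at most one of u_1,…,u_n belongs to {a_i(p), b_i(p), ω_i : 2 ≤ p ≤ g}. -/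
/-- Generators of the rational cohomology of the `n`-fold power of a genus-`g` surface:
`a i p`, `b i p` in degree 1 and `w i` (the class `ω_i`) in degree 2.  The indices are
`0`-based: `a i p` stands for the class `a_{i+1}(p+1)` of the paper. -/
inductive SurfGen (n g : ℕ) : Type
  | a (i : Fin n) (p : Fin g)
  | b (i : Fin n) (p : Fin g)
  | w (i : Fin n)

/-- The cohomological degree of a generator. -/
def SurfGen.deg {n g : ℕ} : SurfGen n g → ℕ
  | .a _ _ => 1
  | .b _ _ => 1
  | .w _ => 2

open FreeAlgebra in
/-- The defining relations of `H^*(Σ_g^{×n}; ℚ)`: within each factor,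
`a_i(p)a_i(q) = b_i(p)b_i(q) = 0`, `a_i(p)b_i(q) = δ_{pq} ω_i`, together with
graded (Koszul-signed) commutativity of the generators. -/
inductive SurfRel (n g : ℕ) :
    FreeAlgebra ℚ (SurfGen n g) → FreeAlgebra ℚ (SurfGen n g) → Prop
  | aa (i : Fin n) (p q : Fin g) :
      SurfRel n g (ι ℚ (SurfGen.a i p) * ι ℚ (SurfGen.a i q)) 0
  | bb (i : Fin n) (p q : Fin g) :
      SurfRel n g (ι ℚ (SurfGen.b i p) * ι ℚ (SurfGen.b i q)) 0
  | ab_eq (i : Fin n) (p : Fin g) :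
      SurfRel n g (ι ℚ (SurfGen.a i p) * ι ℚ (SurfGen.b i p)) (ι ℚ (SurfGen.w i))
  | ab_ne (i : Fin n) (p q : Fin g) : p ≠ q →
      SurfRel n g (ι ℚ (SurfGen.a i p) * ι ℚ (SurfGen.b i q)) 0
  | koszul (u v : SurfGen n g) :
      SurfRel n g (ι ℚ u * ι ℚ v)
        (((-1 : ℚ) ^ (u.deg * v.deg)) • (ι ℚ v * ι ℚ u))

/-- `H^*(Σ_g^{×n}; ℚ)`, presented by generators and relations. -/
def SurfCoh (n g : ℕ) : Type := RingQuot (SurfRel n g)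

noncomputable instance (n g : ℕ) : Ring (SurfCoh n g) :=
  inferInstanceAs (Ring (RingQuot (SurfRel n g)))

noncomputable instance (n g : ℕ) : Algebra ℚ (SurfCoh n g) :=
  inferInstanceAs (Algebra ℚ (RingQuot (SurfRel n g)))

/-- The class `a_{i+1}(p+1)`. -/
noncomputable def gA {n g : ℕ} (i : Fin n) (p : Fin g) : SurfCoh n g :=
  RingQuot.mkAlgHom ℚ (SurfRel n g) (FreeAlgebra.ι ℚ (SurfGen.a i p))

/-- The class `b_{i+1}(p+1)`. -/
noncomputable def gB {n g : ℕ} (i : Fin n) (p : Fin g) : SurfCoh n g :=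
  RingQuot.mkAlgHom ℚ (SurfRel n g) (FreeAlgebra.ι ℚ (SurfGen.b i p))

/-- The class `ω_{i+1}`. -/
noncomputable def gW {n g : ℕ} (i : Fin n) : SurfCoh n g :=
  RingQuot.mkAlgHom ℚ (SurfRel n g) (FreeAlgebra.ι ℚ (SurfGen.w i))

/-- The class `x_{i+1}(p+1)`: equal to `a_{i+1}(p+1)` unless `p+1 = 1` and `i+1 ≥ 2`, in which
case it is `a_{i+1}(1) - a_1(1)`. -/
noncomputable def gX {n g : ℕ} [NeZero n] [NeZero g] (i : Fin n) (p : Fin g) : SurfCoh n g :=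
  if p = 0 ∧ i ≠ 0 then gA i p - gA 0 p else gA i p

/-- The class `y_{i+1}(p+1)`: equal to `b_{i+1}(p+1)` unless `p+1 = 1` and `i+1 ≥ 2`, in which
case it is `b_{i+1}(1) - b_1(1)`. -/
noncomputable def gY {n g : ℕ} [NeZero n] [NeZero g] (i : Fin n) (p : Fin g) : SurfCoh n g :=
  if p = 0 ∧ i ≠ 0 then gB i p - gB 0 p else gB i p

/-- The relations defining the quotient algebra `A_g`: all products
`x_i(p)x_j(q)`, `x_i(p)y_j(q)`, `y_i(p)y_j(q)` with `p, q ≥ 2` and `i ≠ j` are set to zero. -/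
inductive ARel (n g : ℕ) [NeZero n] [NeZero g] : SurfCoh n g → SurfCoh n g → Prop
  | xx (i j : Fin n) (p q : Fin g) : i ≠ j → p ≠ 0 → q ≠ 0 → ARel n g (gX i p * gX j q) 0
  | xy (i j : Fin n) (p q : Fin g) : i ≠ j → p ≠ 0 → q ≠ 0 → ARel n g (gX i p * gY j q) 0
  | yy (i j : Fin n) (p q : Fin g) : i ≠ j → p ≠ 0 → q ≠ 0 → ARel n g (gY i p * gY j q) 0

/-- The algebra `A_g`: the quotient of `H^*(Σ_g^{×n}; ℚ)` by the ideal generated by the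
products `x_i(p)x_j(q)`, `x_i(p)y_j(q)`, `y_i(p)y_j(q)` with `p, q ≥ 2`, `i ≠ j`. -/
def SurfA (n g : ℕ) [NeZero n] [NeZero g] : Type := RingQuot (ARel n g)

noncomputable instance (n g : ℕ) [NeZero n] [NeZero g] : Ring (SurfA n g) :=
  inferInstanceAs (Ring (RingQuot (ARel n g)))

noncomputable instance (n g : ℕ) [NeZero n] [NeZero g] : Algebra ℚ (SurfA n g) :=
  inferInstanceAs (Algebra ℚ (RingQuot (ARel n g)))

/-- The quotient map `H^*(Σ_g^{×n}; ℚ) → A_g`. -/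
noncomputable def toA (n g : ℕ) [NeZero n] [NeZero g] : SurfCoh n g →ₐ[ℚ] SurfA n g :=
  RingQuot.mkAlgHom ℚ (ARel n g)

/-- The image of `x_{i+1} = x_{i+1}(1)` in `A_g`. -/
noncomputable def xA {n g : ℕ} [NeZero n] [NeZero g] (i : Fin n) : SurfA n g :=
  toA n g (gX i 0)

/-- The image of `y_{i+1} = y_{i+1}(1)` in `A_g`. -/
noncomputable def yA {n g : ℕ} [NeZero n] [NeZero g] (i : Fin n) : SurfA n g :=
  toA n g (gY i 0)

/-- The image of `ω_{i+1}` in `A_g`. -/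
noncomputable def wA {n g : ℕ} [NeZero n] [NeZero g] (i : Fin n) : SurfA n g :=
  toA n g (gW i)

/-- The possible letters occurring in the `i`-th slot of a basis monomial:
`1`, `a_i(p)` (resp. `x_i(p)`), `b_i(p)` (resp. `y_i(p)`), or `ω_i`. -/
inductive Letter (g : ℕ) : Type
  | one : Letter g
  | la (p : Fin g) : Letter g
  | lb (p : Fin g) : Letter g
  | lw : Letter g

/-- A letter is *exceptional* if it lies in `{a_i(p), b_i(p), ω_i : 2 ≤ p ≤ g}`
(resp. `{x_i(p), y_i(p), ω_i : 2 ≤ p ≤ g}`). -/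
def Letter.isExc {g : ℕ} [NeZero g] : Letter g → Prop
  | .one => False
  | .la p => p ≠ 0
  | .lb p => p ≠ 0
  | .lw => True

/-- Evaluation of a letter in the `i`-th slot using the generators `a, b, ω`. -/
noncomputable def Letter.evalAB {n g : ℕ} (i : Fin n) : Letter g → SurfCoh n g
  | .one => 1
  | .la p => gA i p
  | .lb p => gB i p
  | .lw => gW i

/-- Evaluation of a letter in the `i`-th slot using the classes `x, y, ω`. -/
noncomputable def Letter.evalXY {n g : ℕ} [NeZero n] [NeZero g] (i : Fin n) :
    Letter g → SurfCoh n g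
  | .one => 1
  | .la p => gX i p
  | .lb p => gY i p
  | .lw => gW i

/-- The monomial `u_1 ⋯ u_n` in `H^*(Σ_g^{×n}; ℚ)` associated to a choice of letters, using the
generators `a, b, ω`. -/
noncomputable def monAB {n g : ℕ} (v : Fin n → Letter g) : SurfCoh n g :=
  (List.ofFn fun i : Fin n => (v i).evalAB i).prod

/-- The monomial `v_1 ⋯ v_n` in `H^*(Σ_g^{×n}; ℚ)` associated to a choice of letters, using the
classes `x, y, ω`. -/
noncomputable def monXY {n g : ℕ} [NeZero n] [NeZero g] (v : Fin n → Letter g) : SurfCoh n g :=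
  (List.ofFn fun i : Fin n => (v i).evalXY i).prod

/-- The proposed basis `β₂` of `A_g`, indexed by monomials `u_1 ⋯ u_n` with each
`u_i ∈ {1, a_i(p), b_i(p), ω_i}` such that at most one `u_i` lies in
`{a_i(p), b_i(p), ω_i : 2 ≤ p ≤ g}`, mapped to their images in `A_g`. -/
noncomputable def basisFunAB (n g : ℕ) [NeZero n] [NeZero g]
    (v : {v : Fin n → Letter g // {i : Fin n | (v i).isExc}.Subsingleton}) : SurfA n g :=
  toA n g (monAB v.1)

/-! The monoid structure on letters in which any two letters other than `1` multiply to `ω` makes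
the set of words `Fin n → Letter g` a commutative monoid, and `H^*(Σ_g^{×n}; ℚ)` is its monoid
algebra twisted by a 2-cocycle recording vanishing products and Koszul signs.  Acting on the
formal combinations of words by twisted left multiplication shows that the monomials are linearly
independent; they span because a product of monomials is a multiple of the monomial of the product
word.  Words with at least two exceptional letters form a monoid ideal, and their monomials span
the ideal defining `A_g`, since `ω_i = a_i(2) b_i(2)`.  Hence `A_g` has the remaining monomials as
a basis. -/

section GeneralAlgebra

lemma mul_list_prod_of_mul_eq_smul_mul {ι R A : Type*} [CommSemiring R] [Semiring A] [Algebra R A]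
    {x : A} {y : ι → A} {s : ι → R} (h : ∀ k, x * y k = s k • (y k * x)) (l : List ι) :
    x * (l.map y).prod = (l.map s).prod • ((l.map y).prod * x) := by
  induction l with
  | nil => simp
  | cons k l ih =>
    simp only [List.map_cons, List.prod_cons]
    rw [← mul_assoc, h, smul_mul_assoc, mul_assoc, ih, mul_smul_comm, smul_smul, mul_assoc]

lemma mem_of_ringQuot_mkAlgHom_eq_zero {R A : Type*} [CommSemiring R] [Ring A] [Algebra R A]
    {r : A → A → Prop} {I : Submodule R A} (hleft : ∀ x, ∀ y ∈ I, x * y ∈ I)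
    (hright : ∀ x ∈ I, ∀ y, x * y ∈ I) (hr : ∀ x y, r x y → x - y ∈ I)
    {x : A} (hx : RingQuot.mkAlgHom R r x = 0) : x ∈ I := by
  let J : TwoSidedIdeal A := .mk' I I.zero_mem I.add_mem
    (fun {x} hx => by simpa using hleft (-1) x hx) (hleft _ _) (fun hx => hright _ hx _)
  have hJ {x : A} : J.ringCon.mk' x = 0 ↔ x ∈ I := by
    rw [← TwoSidedIdeal.mem_ker, TwoSidedIdeal.ker_ringCon_mk', TwoSidedIdeal.mem_mk',
      SetLike.mem_coe]
  have hlift : ∀ ⦃x y⦄, r x y → J.ringCon.mk' x = J.ringCon.mk' y := fun x y hxy => by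
    rw [← sub_eq_zero, ← map_sub, hJ]
    exact hr x y hxy
  have hx0 : RingQuot.mkRingHom r x = 0 := by
    rw [← RingQuot.mkAlgHom_coe R r]
    exact hx
  rw [← hJ, ← RingQuot.lift_mkRingHom_apply _ hlift, hx0, map_zero]

section Basis

variable {ι R M N : Type*} [Ring R] [AddCommGroup M] [AddCommGroup N] [Module R M] [Module R N]
  {b : ι → M} {f : M →ₗ[R] N} {s : Set ι}

lemma linearIndependent_comp_subtype_of_ker_eq_span_compl (hb : LinearIndependent R b)
    (hker : LinearMap.ker f = Submodule.span R (b '' sᶜ)) :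
    LinearIndependent R fun i : s => f (b i) := by
  refine (hb.comp _ Subtype.val_injective).map (f := f) ?_
  rw [hker, Set.range_comp, Subtype.range_coe]
  exact hb.disjoint_span_image disjoint_compl_right

lemma span_range_comp_subtype_eq_top_of_ker_eq_span_compl
    (hb : Submodule.span R (Set.range b) = ⊤) (hf : Function.Surjective f)
    (hker : LinearMap.ker f = Submodule.span R (b '' sᶜ)) :
    Submodule.span R (Set.range fun i : s => f (b i)) = ⊤ := by
  have hrange : Set.range (fun i : s => f (b i)) = f '' (b '' s) := by
    rw [Set.image_image, Set.image_eq_range]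
  rw [hrange, Submodule.span_image, LinearMap.map_eq_top_iff (LinearMap.range_eq_top.2 hf), hker,
    ← Submodule.span_union, ← Set.image_union, Set.union_compl_self, Set.image_univ, hb]

end Basis

/-- Left multiplication by the basis element `u` in the monoid algebra of `M` twisted by
`c : M → M → R`, that is, `u · v = c(u, v) uv` on basis elements.  Only these operators are needed,
so the twisted multiplication itself is not bundled as a ring structure. -/
noncomputable def twistedMulLeft {R M : Type*} [CommSemiring R] [Mul M] (c : M → M → R) (u : M) :
    Module.End R (M →₀ R) :=
  Finsupp.linearCombination R fun v => Finsupp.single (u * v) (c u v)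

section TwistedMulLeft

variable {R M : Type*} [CommSemiring R] {c : M → M → R}

lemma twistedMulLeft_single [Mul M] (u v : M) (r : R) :
    twistedMulLeft c u (Finsupp.single v r) = Finsupp.single (u * v) (r * c u v) := by
  simp [twistedMulLeft]

lemma twistedMulLeft_one [MulOneClass M] (hc : ∀ v, c 1 v = 1) : twistedMulLeft c 1 = 1 := by
  ext v : 2
  simp [twistedMulLeft_single, hc]

lemma twistedMulLeft_mul [Semigroup M]
    (hc : ∀ u v w, c u v * c (u * v) w = c v w * c u (v * w)) (u v : M) :
    twistedMulLeft c u * twistedMulLeft c v = c u v • twistedMulLeft c (u * v) := by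
  ext w : 2
  simp [twistedMulLeft_single, hc, mul_assoc]

end TwistedMulLeft

end GeneralAlgebra

namespace Letter

variable {g : ℕ}

/-- The product of two letters up to a scalar, which is recorded by `Letter.coeff`.  Where the
product of the classes vanishes its value is chosen to be `ω`, which keeps it associative. -/
protected def mul : Letter g → Letter g → Letter g
  | .one, l => l
  | l, .one => l
  | _, _ => .lw

instance : CommMonoid (Letter g) where
  one := .one
  mul := Letter.mul
  mul_assoc u v w := by cases u <;> cases v <;> cases w <;> rfl
  one_mul u := by cases u <;> rfl
  mul_one u := by cases u <;> rfl
  mul_comm u v := by cases u <;> cases v <;> rfl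

lemma mul_def (u v : Letter g) : u * v = u.mul v := rfl

/-- The structure constant of the cohomology of one surface: the product of the classes of `u` and
`v` is `coeff u v` times the class of `u * v`. -/
def coeff : Letter g → Letter g → ℚ
  | .one, _ => 1
  | _, .one => 1
  | .la p, .lb q => if p = q then 1 else 0
  | .lb p, .la q => if p = q then -1 else 0
  | _, _ => 0

/-- The cohomological degree of a letter. -/
def deg : Letter g → ℕ
  | .one => 0
  | .la _ => 1
  | .lb _ => 1
  | .lw => 2

/-- The Koszul sign of interchanging two letters. -/
def sign (u v : Letter g) : ℚ := (-1) ^ (u.deg * v.deg)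

@[simp] lemma coeff_one_left (u : Letter g) : coeff 1 u = 1 := by cases u <;> rfl

@[simp] lemma coeff_one_right (u : Letter g) : coeff u 1 = 1 := by cases u <;> rfl

@[simp] lemma sign_one_left (u : Letter g) : sign 1 u = 1 := by simp [sign, deg]

@[simp] lemma sign_one_right (u : Letter g) : sign u 1 = 1 := by simp [sign, deg]

lemma sign_comm (u v : Letter g) : sign u v = sign v u := by rw [sign, sign, mul_comm]

lemma sign_ne_zero (u v : Letter g) : sign u v ≠ 0 := pow_ne_zero _ (by norm_num)

lemma sign_mul_self (u v : Letter g) : sign u v * sign u v = 1 := by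
  rw [sign, ← mul_pow]
  norm_num

lemma coeff_cocycle (u v w : Letter g) :
    coeff u v * coeff (u * v) w = coeff v w * coeff u (v * w) := by
  cases u <;> cases v <;> cases w <;> simp [mul_def, Letter.mul, coeff]

lemma coeff_comm (u v : Letter g) : coeff u v = sign u v * coeff v u := by
  cases u <;> cases v <;> simp [coeff, sign, deg, eq_comm]

lemma deg_mul {u v : Letter g} (h : coeff u v ≠ 0) : (u * v).deg = u.deg + v.deg := by
  cases u <;> cases v <;> simp_all [mul_def, Letter.mul, coeff, deg]

lemma sign_mul_left {u v : Letter g} (h : coeff u v ≠ 0) (w : Letter g) :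
    sign (u * v) w = sign u w * sign v w := by
  simp only [sign, deg_mul h, add_mul, pow_add]

lemma sign_mul_right (u : Letter g) {v w : Letter g} (h : coeff v w ≠ 0) :
    sign u (v * w) = sign u v * sign u w := by
  simp only [sign, deg_mul h, mul_add, pow_add]

lemma isExc.mul_left [NeZero g] {v : Letter g} (h : v.isExc) (u : Letter g) : (u * v).isExc := by
  cases u <;> cases v <;> simp_all [mul_def, Letter.mul, isExc]

end Letter

section WordCoeff

variable {n g : ℕ}

/-- The Koszul sign of bringing the concatenation of `u_1 ⋯ u_n` and `v_1 ⋯ v_n` into the order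
`u_1 v_1 ⋯ u_n v_n`. -/
def wordSign (u v : Fin n → Letter g) : ℚ :=
  ∏ i, ∏ j ∈ Finset.Iio i, (u i).sign (v j)

/-- The structure constants of `H^*(Σ_g^{×n}; ℚ)` in the basis of monomials, as a 2-cocycle on the
monoid of words. -/
def wordCoeff (u v : Fin n → Letter g) : ℚ :=
  wordSign u v * ∏ i, (u i).coeff (v i)

lemma wordCoeff_one_left (v : Fin n → Letter g) : wordCoeff 1 v = 1 := by
  simp [wordCoeff, wordSign]

lemma wordCoeff_one_right (u : Fin n → Letter g) : wordCoeff u 1 = 1 := by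
  simp [wordCoeff, wordSign]

lemma wordSign_mul_left {u v : Fin n → Letter g} (h : ∀ i, (u i).coeff (v i) ≠ 0)
    (w : Fin n → Letter g) : wordSign (u * v) w = wordSign u w * wordSign v w := by
  simp only [wordSign, Pi.mul_apply, Letter.sign_mul_left (h _), Finset.prod_mul_distrib]

lemma wordSign_mul_right (u : Fin n → Letter g) {v w : Fin n → Letter g}
    (h : ∀ i, (v i).coeff (w i) ≠ 0) : wordSign u (v * w) = wordSign u v * wordSign u w := by
  simp only [wordSign, Pi.mul_apply, Letter.sign_mul_right _ (h _), Finset.prod_mul_distrib]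

lemma wordCoeff_cocycle (u v w : Fin n → Letter g) :
    wordCoeff u v * wordCoeff (u * v) w = wordCoeff v w * wordCoeff u (v * w) := by
  have hcoeff : (∏ i, (u i).coeff (v i)) * ∏ i, ((u * v) i).coeff (w i) =
      (∏ i, (v i).coeff (w i)) * ∏ i, (u i).coeff ((v * w) i) := by
    simp only [← Finset.prod_mul_distrib, Pi.mul_apply, Letter.coeff_cocycle]
  simp only [wordCoeff]
  -- The signs are bimultiplicative only where the coefficients do not vanish.
  by_cases h : (∏ i, (u i).coeff (v i)) * ∏ i, ((u * v) i).coeff (w i) = 0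
  · linear_combination (wordSign u v * wordSign (u * v) w - wordSign v w * wordSign u (v * w)) * h +
      wordSign v w * wordSign u (v * w) * hcoeff
  · have huv := Finset.prod_ne_zero_iff.1 (left_ne_zero_of_mul h)
    have hvw := Finset.prod_ne_zero_iff.1 (left_ne_zero_of_mul (hcoeff ▸ h))
    rw [wordSign_mul_left fun i => huv i (Finset.mem_univ i),
      wordSign_mul_right _ fun i => hvw i (Finset.mem_univ i)]
    linear_combination wordSign u v * wordSign u w * wordSign v w * hcoeff

lemma wordCoeff_mulSingle_left (i : Fin n) (l : Letter g) (v : Fin n → Letter g) :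
    wordCoeff (Pi.mulSingle i l) v = (∏ j ∈ Finset.Iio i, l.sign (v j)) * l.coeff (v i) := by
  rw [wordCoeff, wordSign, Finset.prod_eq_single_of_mem i (Finset.mem_univ i),
    Finset.prod_eq_single_of_mem i (Finset.mem_univ i), Pi.mulSingle_eq_same]
  all_goals
    intro j _ hj
    simp [Pi.mulSingle_eq_of_ne hj]

lemma wordCoeff_mulSingle_mulSingle_same (i : Fin n) (l l' : Letter g) :
    wordCoeff (Pi.mulSingle i l) (Pi.mulSingle i l') = l.coeff l' := by
  simp [wordCoeff_mulSingle_left, Pi.mulSingle_apply, apply_ite]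

lemma wordCoeff_mulSingle_comm (i j : Fin n) (l l' : Letter g) :
    wordCoeff (Pi.mulSingle i l) (Pi.mulSingle j l') =
      l.sign l' * wordCoeff (Pi.mulSingle j l') (Pi.mulSingle i l) := by
  rcases lt_trichotomy i j with h | rfl | h
  · simp [wordCoeff_mulSingle_left, Pi.mulSingle_apply, apply_ite, h, h.ne, h.ne', h.not_gt,
      l'.sign_comm l, Letter.sign_mul_self]
  · rw [wordCoeff_mulSingle_mulSingle_same, wordCoeff_mulSingle_mulSingle_same, Letter.coeff_comm]
  · simp [wordCoeff_mulSingle_left, Pi.mulSingle_apply, apply_ite, h, h.ne, h.ne', h.not_gt]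

lemma wordCoeff_mulSingle_left_of_forall_le_eq_one {i : Fin n} {v : Fin n → Letter g}
    (hv : ∀ j ≤ i, v j = 1) (l : Letter g) : wordCoeff (Pi.mulSingle i l) v = 1 := by
  rw [wordCoeff_mulSingle_left, hv i le_rfl, Letter.coeff_one_right, mul_one]
  refine Finset.prod_eq_one fun j hj => ?_
  rw [hv j (Finset.mem_Iio.1 hj).le, Letter.sign_one_right]

end WordCoeff

namespace SurfGen

variable {n g : ℕ}

/-- The index of the surface factor from which a generator is pulled back. -/
def slot : SurfGen n g → Fin n
  | .a i _ => i
  | .b i _ => i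
  | .w i => i

/-- The letter of a generator; together with `SurfGen.slot` it determines the generator. -/
def letter : SurfGen n g → Letter g
  | .a _ p => .la p
  | .b _ p => .lb p
  | .w _ => .lw

lemma deg_letter (s : SurfGen n g) : s.letter.deg = s.deg := by cases s <;> rfl

end SurfGen

section WordRep

variable {n g : ℕ}

/-- The operator on formal combinations of words by which the letter `l` in slot `i` acts. -/
noncomputable def letterOp (i : Fin n) (l : Letter g) :
    Module.End ℚ ((Fin n → Letter g) →₀ ℚ) :=
  twistedMulLeft wordCoeff (Pi.mulSingle i l)

lemma letterOp_one (i : Fin n) : letterOp i (1 : Letter g) = 1 := by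
  rw [letterOp, Pi.mulSingle_one, twistedMulLeft_one wordCoeff_one_left]

lemma letterOp_mul_letterOp_same (i : Fin n) (l l' : Letter g) :
    letterOp i l * letterOp i l' = l.coeff l' • letterOp i (l * l') := by
  rw [letterOp, letterOp, twistedMulLeft_mul wordCoeff_cocycle, wordCoeff_mulSingle_mulSingle_same,
    ← Pi.mulSingle_mul, letterOp]

lemma letterOp_comm (i j : Fin n) (l l' : Letter g) :
    letterOp i l * letterOp j l' = l.sign l' • (letterOp j l' * letterOp i l) := by
  simp only [letterOp, twistedMulLeft_mul wordCoeff_cocycle]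
  rw [wordCoeff_mulSingle_comm, mul_comm (Pi.mulSingle i l : Fin n → Letter g), smul_smul]

/-- The action of the free algebra on formal combinations of words that descends to `wordRep`. -/
noncomputable def freeWordRep :
    FreeAlgebra ℚ (SurfGen n g) →ₐ[ℚ] Module.End ℚ ((Fin n → Letter g) →₀ ℚ) :=
  FreeAlgebra.lift ℚ fun s => letterOp s.slot s.letter

lemma freeWordRep_eq_of_surfRel {x y : FreeAlgebra ℚ (SurfGen n g)} (h : SurfRel n g x y) :
    freeWordRep x = freeWordRep y := by
  cases h with
  | koszul s t =>
    simp only [freeWordRep, map_mul, map_smul, FreeAlgebra.lift_ι_apply]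
    rw [letterOp_comm, Letter.sign, s.deg_letter, t.deg_letter]
  | _ =>
    simp_all [freeWordRep, SurfGen.slot, SurfGen.letter, letterOp_mul_letterOp_same, Letter.coeff,
      Letter.mul_def, Letter.mul]

/-- The quotient map from the free algebra on the generators to `H^*(Σ_g^{×n}; ℚ)`. -/
noncomputable def toCoh (n g : ℕ) : FreeAlgebra ℚ (SurfGen n g) →ₐ[ℚ] SurfCoh n g :=
  RingQuot.mkAlgHom ℚ (SurfRel n g)

/-- The left regular representation of `H^*(Σ_g^{×n}; ℚ)`, realised on formal combinations of
words. -/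
noncomputable def wordRep : SurfCoh n g →ₐ[ℚ] Module.End ℚ ((Fin n → Letter g) →₀ ℚ) :=
  RingQuot.liftAlgHom ℚ ⟨freeWordRep, fun _ _ => freeWordRep_eq_of_surfRel⟩

lemma wordRep_toCoh_ι (s : SurfGen n g) :
    wordRep (toCoh n g (FreeAlgebra.ι ℚ s)) = letterOp s.slot s.letter :=
  (RingQuot.liftAlgHom_mkAlgHom_apply ..).trans (FreeAlgebra.lift_ι_apply ..)

lemma wordRep_evalAB (i : Fin n) (l : Letter g) : wordRep (l.evalAB i) = letterOp i l := by
  cases l with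
  | one => exact (map_one _).trans (letterOp_one i).symm
  | la p => exact wordRep_toCoh_ι (.a i p)
  | lb p => exact wordRep_toCoh_ι (.b i p)
  | lw => exact wordRep_toCoh_ι (.w i)

lemma monAB_eq_prod_finRange (v : Fin n → Letter g) :
    monAB v = ((List.finRange n).map fun i => (v i).evalAB i).prod := by
  rw [monAB, List.ofFn_eq_map]

lemma prod_finRange_mulSingle (v : Fin n → Letter g) :
    ((List.finRange n).map fun i => Pi.mulSingle i (v i)).prod = v := by
  rw [← List.ofFn_eq_map, List.prod_ofFn, Finset.univ_prod_mulSingle]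

lemma list_prod_mulSingle_apply_of_notMem (v : Fin n → Letter g) {l : List (Fin n)} {j : Fin n}
    (hj : j ∉ l) : (l.map fun i => Pi.mulSingle i (v i)).prod j = 1 := by
  induction l with
  | nil => rfl
  | cons i l ih =>
    rw [List.mem_cons, not_or] at hj
    rw [List.map_cons, List.prod_cons, Pi.mul_apply, Pi.mulSingle_eq_of_ne hj.1, one_mul, ih hj.2]

lemma list_prod_letterOp (v : Fin n → Letter g) {l : List (Fin n)} (hl : l.Pairwise (· < ·)) :
    (l.map fun i => letterOp i (v i)).prod =
      twistedMulLeft wordCoeff (l.map fun i => Pi.mulSingle i (v i)).prod := by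
  induction l with
  | nil => exact (twistedMulLeft_one wordCoeff_one_left).symm
  | cons i l ih =>
    rw [List.pairwise_cons] at hl
    have htail : ∀ j ≤ i, (l.map fun i => Pi.mulSingle i (v i)).prod j = 1 := fun j hj =>
      list_prod_mulSingle_apply_of_notMem v fun hjl => (hl.1 j hjl).not_ge hj
    simp only [List.map_cons, List.prod_cons]
    rw [ih hl.2, letterOp, twistedMulLeft_mul wordCoeff_cocycle,
      wordCoeff_mulSingle_left_of_forall_le_eq_one htail, one_smul]

lemma wordRep_monAB (v : Fin n → Letter g) : wordRep (monAB v) = twistedMulLeft wordCoeff v := by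
  rw [monAB_eq_prod_finRange, map_list_prod, List.map_map]
  simp only [Function.comp_def, wordRep_evalAB]
  rw [list_prod_letterOp v (List.pairwise_lt_finRange n), prod_finRange_mulSingle]

theorem linearIndependent_monAB :
    LinearIndependent ℚ (monAB : (Fin n → Letter g) → SurfCoh n g) := by
  let evalAtOne : SurfCoh n g →ₗ[ℚ] (Fin n → Letter g) →₀ ℚ :=
    (LinearMap.applyₗ (Finsupp.single 1 1)).comp wordRep.toLinearMap
  refine LinearIndependent.of_comp evalAtOne ?_
  have hbasis : evalAtOne ∘ monAB = fun v => Finsupp.single v 1 := funext fun v => by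
    simp [evalAtOne, wordRep_monAB, twistedMulLeft_single, wordCoeff_one_right]
  rw [hbasis]
  exact Finsupp.linearIndependent_single_one ℚ _

end WordRep

section Products

variable {n g : ℕ}

lemma toCoh_surjective : Function.Surjective (toCoh n g) :=
  RingQuot.mkAlgHom_surjective ℚ (SurfRel n g)

lemma toCoh_eq_of_surfRel {x y : FreeAlgebra ℚ (SurfGen n g)} (h : SurfRel n g x y) :
    toCoh n g x = toCoh n g y :=
  RingQuot.mkAlgHom_rel ℚ h

lemma toCoh_ι (s : SurfGen n g) : toCoh n g (FreeAlgebra.ι ℚ s) = s.letter.evalAB s.slot := by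
  cases s <;> rfl

lemma gA_mul_gA (i : Fin n) (p q : Fin g) : gA i p * gA i q = 0 := by
  simpa only [map_mul, map_zero, toCoh_ι] using! toCoh_eq_of_surfRel (SurfRel.aa i p q)

lemma gB_mul_gB (i : Fin n) (p q : Fin g) : gB i p * gB i q = 0 := by
  simpa only [map_mul, map_zero, toCoh_ι] using! toCoh_eq_of_surfRel (SurfRel.bb i p q)

lemma gA_mul_gB_self (i : Fin n) (p : Fin g) : gA i p * gB i p = gW i := by
  simpa only [map_mul, toCoh_ι] using! toCoh_eq_of_surfRel (SurfRel.ab_eq i p)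

lemma gA_mul_gB_of_ne (i : Fin n) {p q : Fin g} (h : p ≠ q) : gA i p * gB i q = 0 := by
  simpa only [map_mul, map_zero, toCoh_ι] using! toCoh_eq_of_surfRel (SurfRel.ab_ne i p q h)

lemma gA_mul_gB (i : Fin n) (p q : Fin g) :
    gA i p * gB i q = (if p = q then 1 else 0 : ℚ) • gW i := by
  split_ifs with h
  · rw [h, gA_mul_gB_self, one_smul]
  · rw [gA_mul_gB_of_ne i h, zero_smul]

namespace Letter

lemma eq_one_or_exists_gen (i : Fin n) (l : Letter g) :
    l = 1 ∨ ∃ s : SurfGen n g, s.slot = i ∧ s.letter = l := by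
  cases l with
  | one => exact .inl rfl
  | la p => exact .inr ⟨.a i p, rfl, rfl⟩
  | lb p => exact .inr ⟨.b i p, rfl, rfl⟩
  | lw => exact .inr ⟨.w i, rfl, rfl⟩

@[simp] lemma evalAB_one (i : Fin n) : (1 : Letter g).evalAB i = 1 := rfl

lemma evalAB_comm (i j : Fin n) (u v : Letter g) :
    u.evalAB i * v.evalAB j = u.sign v • (v.evalAB j * u.evalAB i) := by
  rcases u.eq_one_or_exists_gen i with rfl | ⟨s, rfl, rfl⟩
  · simp
  rcases v.eq_one_or_exists_gen j with rfl | ⟨t, rfl, rfl⟩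
  · simp
  simpa only [map_mul, map_smul, toCoh_ι, sign, SurfGen.deg_letter] using
    toCoh_eq_of_surfRel (SurfRel.koszul s t)

end Letter

lemma gB_mul_gA (i j : Fin n) (p q : Fin g) : gB i p * gA j q = -(gA j q * gB i p) := by
  simpa [Letter.evalAB, Letter.sign, Letter.deg] using Letter.evalAB_comm i j (.lb p) (.la q)

lemma gA_mul_gW (i : Fin n) (p : Fin g) : gA i p * gW i = 0 := by
  rw [← gA_mul_gB_self i p, ← mul_assoc, gA_mul_gA, zero_mul]

lemma gW_mul_gB (i : Fin n) (p : Fin g) : gW i * gB i p = 0 := by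
  rw [← gA_mul_gB_self i p, mul_assoc, gB_mul_gB, mul_zero]

lemma gW_mul_gA (i : Fin n) (p : Fin g) : gW i * gA i p = 0 := by
  rw [← gA_mul_gB_self i p, mul_assoc, gB_mul_gA, mul_neg, ← mul_assoc, gA_mul_gA, zero_mul,
    neg_zero]

lemma gB_mul_gW (i : Fin n) (p : Fin g) : gB i p * gW i = 0 := by
  rw [← gA_mul_gB_self i p, ← mul_assoc, gB_mul_gA, neg_mul, mul_assoc, gB_mul_gB, mul_zero,
    neg_zero]

lemma gW_mul_gW [NeZero g] (i : Fin n) : gW i * gW i = (0 : SurfCoh n g) := by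
  nth_rw 2 [← gA_mul_gB_self i 0]
  rw [← mul_assoc, gW_mul_gA, zero_mul]

lemma Letter.evalAB_mul_evalAB_same [NeZero g] (i : Fin n) (u v : Letter g) :
    u.evalAB i * v.evalAB i = u.coeff v • (u * v).evalAB i := by
  cases u <;> cases v <;>
    simp [Letter.evalAB, Letter.coeff, Letter.mul_def, Letter.mul, gA_mul_gA, gB_mul_gB, gA_mul_gB,
      gB_mul_gA, gA_mul_gW, gB_mul_gW, gW_mul_gA, gW_mul_gB, gW_mul_gW, eq_comm,
      neg_ite]

lemma exists_evalAB_mul_monAB [NeZero g] (i : Fin n) (l : Letter g) (v : Fin n → Letter g) :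
    ∃ s : ℚ, s ≠ 0 ∧
      l.evalAB i * monAB v = (s * l.coeff (v i)) • monAB (Pi.mulSingle i l * v) := by
  obtain ⟨l₁, l₂, hsplit⟩ := List.append_of_mem (List.mem_finRange i)
  have hnodup : (l₁ ++ i :: l₂).Nodup := hsplit ▸ List.nodup_finRange n
  have hi₁ : i ∉ l₁ := fun h => List.disjoint_of_nodup_append hnodup h List.mem_cons_self
  have hi₂ : i ∉ l₂ := (List.nodup_cons.1 hnodup.of_append_right).1
  have hrest {l' : List (Fin n)} (hi : i ∉ l') :
      (l'.map fun k => (Pi.mulSingle (M := fun _ => Letter g) i l k * v k).evalAB k) =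
        l'.map fun k => (v k).evalAB k :=
    List.map_congr_left fun k hk => by
      rw [Pi.mulSingle_eq_of_ne (ne_of_mem_of_not_mem hk hi), one_mul]
  refine ⟨(l₁.map fun k => l.sign (v k)).prod, ?_, ?_⟩
  · exact List.prod_ne_zero fun h => by
      obtain ⟨k, -, hk⟩ := List.mem_map.1 h
      exact l.sign_ne_zero _ hk
  · simp only [monAB_eq_prod_finRange, hsplit, List.map_append, List.map_cons, List.prod_append,
      List.prod_cons, hrest hi₁, hrest hi₂, Pi.mul_apply, Pi.mulSingle_eq_same]
    rw [← mul_assoc, mul_list_prod_of_mul_eq_smul_mul fun k => l.evalAB_comm i k (v k),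
      smul_mul_assoc, mul_assoc, ← mul_assoc (l.evalAB i), Letter.evalAB_mul_evalAB_same,
      smul_mul_assoc, mul_smul_comm, smul_smul]

lemma monAB_one : monAB (1 : Fin n → Letter g) = 1 := by
  simp [monAB_eq_prod_finRange]

lemma exists_monAB_mul_monAB [NeZero g] (u v : Fin n → Letter g) :
    ∃ s : ℚ, monAB u * monAB v = s • monAB (u * v) := by
  have hlist (l : List (Fin n)) : ∃ s : ℚ, (l.map fun i => (u i).evalAB i).prod * monAB v =
      s • monAB ((l.map fun i => Pi.mulSingle i (u i)).prod * v) := by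
    induction l with
    | nil => exact ⟨1, by simp⟩
    | cons i l ih =>
      obtain ⟨s, hs⟩ := ih
      obtain ⟨t, -, ht⟩ := exists_evalAB_mul_monAB i (u i)
        ((l.map fun i => Pi.mulSingle i (u i)).prod * v)
      simp only [List.map_cons, List.prod_cons]
      exact ⟨_, by rw [mul_assoc, hs, mul_smul_comm, ht, smul_smul, mul_assoc]⟩
  rw [monAB_eq_prod_finRange u]
  simpa only [prod_finRange_mulSingle] using hlist (List.finRange n)

lemma exists_evalAB_eq_smul_monAB [NeZero g] (i : Fin n) (l : Letter g) :
    ∃ s : ℚ, l.evalAB i = s • monAB (Pi.mulSingle i l) := by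
  obtain ⟨s, -, hs⟩ := exists_evalAB_mul_monAB i l 1
  rw [monAB_one, mul_one, mul_one] at hs
  exact ⟨_, hs⟩

lemma exists_monAB_eq_smul_evalAB_mul [NeZero g] (i : Fin n) (v : Fin n → Letter g) :
    ∃ s : ℚ, monAB v = s • ((v i).evalAB i * monAB (Function.update v i 1)) := by
  have hv : Pi.mulSingle i (v i) * Function.update v i 1 = v := by
    ext k
    by_cases hk : k = i
    · subst hk
      simp
    · simp [hk]
  obtain ⟨s, hs, h⟩ := exists_evalAB_mul_monAB i (v i) (Function.update v i 1)
  rw [Function.update_self, Letter.coeff_one_right, mul_one, hv] at h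
  exact ⟨s⁻¹, by rw [h, inv_smul_smul₀ hs]⟩

theorem span_range_monAB [NeZero g] :
    Submodule.span ℚ (Set.range (monAB : (Fin n → Letter g) → SurfCoh n g)) = ⊤ := by
  set S := Submodule.span ℚ (Set.range (monAB : (Fin n → Letter g) → SurfCoh n g))
  have hmon (v : Fin n → Letter g) : monAB v ∈ S := Submodule.subset_span ⟨v, rfl⟩
  have hmul : S * S ≤ S := by
    rw [Submodule.span_mul_span, Submodule.span_le]
    rintro _ ⟨_, ⟨u, rfl⟩, _, ⟨v, rfl⟩, rfl⟩
    obtain ⟨s, hs⟩ := exists_monAB_mul_monAB u v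
    exact (congrArg (· ∈ S) hs).mpr (S.smul_mem s (hmon _))
  refine S.eq_top_iff'.2 fun x => ?_
  obtain ⟨x, rfl⟩ := toCoh_surjective x
  induction x using FreeAlgebra.induction with
  | grade0 r =>
    rw [AlgHom.commutes, Algebra.algebraMap_eq_smul_one, ← monAB_one]
    exact S.smul_mem r (hmon 1)
  | grade1 s =>
    obtain ⟨r, hr⟩ := exists_evalAB_eq_smul_monAB s.slot s.letter
    rw [toCoh_ι, hr]
    exact S.smul_mem r (hmon _)
  | mul x y hx hy => exact map_mul (toCoh n g) x y ▸ hmul (Submodule.mul_mem_mul hx hy)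
  | add x y hx hy => exact map_add (toCoh n g) x y ▸ S.add_mem hx hy

end Products

section Admissible

variable {n g : ℕ} [NeZero g]

variable (n g) in
/-- The words with at most one exceptional letter, which index the basis of `A_g`. -/
def admissibleWords : Set (Fin n → Letter g) :=
  {v | {i | (v i).isExc}.Subsingleton}

lemma mul_notMem_admissibleWords {v : Fin n → Letter g} (hv : v ∉ admissibleWords n g)
    (u : Fin n → Letter g) : u * v ∉ admissibleWords n g :=
  fun h => hv (h.anti fun i hi => Letter.isExc.mul_left hi (u i))

lemma mulSingle_mul_mulSingle_notMem_admissibleWords {i j : Fin n} (hij : i ≠ j) {u v : Letter g}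
    (hu : u.isExc) (hv : v.isExc) :
    Pi.mulSingle i u * Pi.mulSingle j v ∉ admissibleWords n g := fun h => by
  refine hij (h ?_ ?_)
  · simpa [Pi.mulSingle_eq_of_ne hij] using hu
  · simpa [Pi.mulSingle_eq_of_ne hij.symm] using hv

variable (n g) in
/-- The span of the monomials of the words with at least two exceptional letters; it is the ideal
by which `A_g` is defined (see `ker_toA`). -/
noncomputable def inadmissibleSpan : Submodule ℚ (SurfCoh n g) :=
  Submodule.span ℚ (monAB '' (admissibleWords n g)ᶜ)

lemma mul_mem_inadmissibleSpan (x : SurfCoh n g) {y : SurfCoh n g}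
    (hy : y ∈ inadmissibleSpan n g) : x * y ∈ inadmissibleSpan n g := by
  have hle : ⊤ * inadmissibleSpan n g ≤ inadmissibleSpan n g := by
    rw [← span_range_monAB, inadmissibleSpan, Submodule.span_mul_span, Submodule.span_le]
    rintro _ ⟨_, ⟨u, rfl⟩, _, ⟨v, hv, rfl⟩, rfl⟩
    obtain ⟨s, hs⟩ := exists_monAB_mul_monAB u v
    exact (congrArg (· ∈ inadmissibleSpan n g) hs).mpr <| Submodule.smul_mem _ s
      (Submodule.subset_span ⟨_, mul_notMem_admissibleWords hv u, rfl⟩)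
  exact hle (Submodule.mul_mem_mul Submodule.mem_top hy)

lemma mul_mem_inadmissibleSpan_of_left {x : SurfCoh n g} (hx : x ∈ inadmissibleSpan n g)
    (y : SurfCoh n g) : x * y ∈ inadmissibleSpan n g := by
  have hle : inadmissibleSpan n g * ⊤ ≤ inadmissibleSpan n g := by
    rw [← span_range_monAB, inadmissibleSpan, Submodule.span_mul_span, Submodule.span_le]
    rintro _ ⟨_, ⟨v, hv, rfl⟩, _, ⟨u, rfl⟩, rfl⟩
    obtain ⟨s, hs⟩ := exists_monAB_mul_monAB v u
    exact (congrArg (· ∈ inadmissibleSpan n g) hs).mpr <| Submodule.smul_mem _ s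
      (Submodule.subset_span ⟨_, mul_comm u v ▸ mul_notMem_admissibleWords hv u, rfl⟩)
  exact hle (Submodule.mul_mem_mul hx Submodule.mem_top)

lemma evalAB_mul_evalAB_mem_inadmissibleSpan {i j : Fin n} (hij : i ≠ j) {u v : Letter g}
    (hu : u.isExc) (hv : v.isExc) : u.evalAB i * v.evalAB j ∈ inadmissibleSpan n g := by
  obtain ⟨s, hs⟩ := exists_evalAB_eq_smul_monAB j v
  obtain ⟨t, -, ht⟩ := exists_evalAB_mul_monAB i u (Pi.mulSingle j v)
  rw [hs, mul_smul_comm, ht]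
  exact Submodule.smul_mem _ _ (Submodule.smul_mem _ _ (Submodule.subset_span
    ⟨_, mulSingle_mul_mulSingle_notMem_admissibleWords hij hu hv, rfl⟩))

end Admissible

section Quotient

variable {n g : ℕ} [NeZero n] [NeZero g]

lemma toA_surjective : Function.Surjective (toA n g) :=
  RingQuot.mkAlgHom_surjective ℚ (ARel n g)

lemma gX_of_ne_zero (i : Fin n) {p : Fin g} (hp : p ≠ 0) : gX i p = gA i p := by simp [gX, hp]

lemma gY_of_ne_zero (i : Fin n) {p : Fin g} (hp : p ≠ 0) : gY i p = gB i p := by simp [gY, hp]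

lemma sub_mem_inadmissibleSpan_of_aRel {x y : SurfCoh n g} (h : ARel n g x y) :
    x - y ∈ inadmissibleSpan n g := by
  cases h with
  | xx i j p q hij hp hq =>
    rw [gX_of_ne_zero i hp, gX_of_ne_zero j hq, sub_zero]
    exact evalAB_mul_evalAB_mem_inadmissibleSpan (u := .la p) (v := .la q) hij hp hq
  | xy i j p q hij hp hq =>
    rw [gX_of_ne_zero i hp, gY_of_ne_zero j hq, sub_zero]
    exact evalAB_mul_evalAB_mem_inadmissibleSpan (u := .la p) (v := .lb q) hij hp hq
  | yy i j p q hij hp hq =>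
    rw [gY_of_ne_zero i hp, gY_of_ne_zero j hq, sub_zero]
    exact evalAB_mul_evalAB_mem_inadmissibleSpan (u := .lb p) (v := .lb q) hij hp hq

lemma toA_gA_mul_gA {i j : Fin n} (hij : i ≠ j) {p q : Fin g} (hp : p ≠ 0) (hq : q ≠ 0) :
    toA n g (gA i p * gA j q) = 0 := by
  rw [← gX_of_ne_zero i hp, ← gX_of_ne_zero j hq]
  exact (RingQuot.mkAlgHom_rel ℚ (ARel.xx i j p q hij hp hq)).trans (map_zero _)

lemma toA_gA_mul_gB {i j : Fin n} (hij : i ≠ j) {p q : Fin g} (hp : p ≠ 0) (hq : q ≠ 0) :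
    toA n g (gA i p * gB j q) = 0 := by
  rw [← gX_of_ne_zero i hp, ← gY_of_ne_zero j hq]
  exact (RingQuot.mkAlgHom_rel ℚ (ARel.xy i j p q hij hp hq)).trans (map_zero _)

lemma toA_gB_mul_gB {i j : Fin n} (hij : i ≠ j) {p q : Fin g} (hp : p ≠ 0) (hq : q ≠ 0) :
    toA n g (gB i p * gB j q) = 0 := by
  rw [← gY_of_ne_zero i hp, ← gY_of_ne_zero j hq]
  exact (RingQuot.mkAlgHom_rel ℚ (ARel.yy i j p q hij hp hq)).trans (map_zero _)

lemma toA_evalAB_mul_evalAB_of_ne_lw {i j : Fin n} (hij : i ≠ j) {u v : Letter g}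
    (hu : u.isExc) (hv : v.isExc) (hu' : u ≠ .lw) (hv' : v ≠ .lw) :
    toA n g (u.evalAB i * v.evalAB j) = 0 := by
  match u, v with
  | .la p, .la q => exact toA_gA_mul_gA hij hu hv
  | .la p, .lb q => exact toA_gA_mul_gB hij hu hv
  | .lb p, .la q =>
    have h := toA_gA_mul_gB hij.symm hv hu
    simpa only [Letter.evalAB, gB_mul_gA, map_neg, neg_eq_zero] using h
  | .lb p, .lb q => exact toA_gB_mul_gB hij hu hv

lemma toA_evalAB_mul_evalAB (hg : 2 ≤ g) {i j : Fin n} (hij : i ≠ j) {u v : Letter g}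
    (hu : u.isExc) (hv : v.isExc) : toA n g (u.evalAB i * v.evalAB j) = 0 := by
  let p : Fin g := ⟨1, hg⟩
  have hp : p ≠ 0 := by simp [p, Fin.ext_iff]
  have hleft {u : Letter g} (hu : u.isExc) (hu' : u ≠ .lw) :
      toA n g (u.evalAB i * v.evalAB j) = 0 := by
    by_cases hv' : v = .lw
    · have h : toA n g (u.evalAB i * gA j p) = 0 :=
        toA_evalAB_mul_evalAB_of_ne_lw (v := .la p) hij hu hp hu' nofun
      rw [hv', Letter.evalAB, ← gA_mul_gB_self j p, ← mul_assoc, map_mul, h, zero_mul]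
    · exact toA_evalAB_mul_evalAB_of_ne_lw hij hu hv hu' hv'
  by_cases hu' : u = .lw
  · have h : toA n g (gB i p * v.evalAB j) = 0 := hleft (u := .lb p) hp nofun
    rw [hu', Letter.evalAB, ← gA_mul_gB_self i p, mul_assoc, map_mul, h, mul_zero]
  · exact hleft hu hu'

lemma toA_monAB_of_notMem_admissibleWords (hg : 2 ≤ g) {v : Fin n → Letter g}
    (hv : v ∉ admissibleWords n g) : toA n g (monAB v) = 0 := by
  obtain ⟨i, hi, j, hj, hij⟩ := Set.not_subsingleton_iff.1 hv
  obtain ⟨s, hs⟩ := exists_monAB_eq_smul_evalAB_mul i v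
  obtain ⟨t, ht⟩ := exists_monAB_eq_smul_evalAB_mul j (Function.update v i 1)
  rw [Function.update_of_ne hij.symm] at ht
  rw [hs, ht, mul_smul_comm, ← mul_assoc, map_smul, map_smul, map_mul,
    toA_evalAB_mul_evalAB hg hij hi hj, zero_mul, smul_zero, smul_zero]

theorem ker_toA (hg : 2 ≤ g) :
    LinearMap.ker (toA n g).toLinearMap = inadmissibleSpan n g := by
  refine le_antisymm ?_ (Submodule.span_le.2 ?_)
  · intro x hx
    exact mem_of_ringQuot_mkAlgHom_eq_zero (fun x _ hy => mul_mem_inadmissibleSpan x hy)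
      (fun _ hx y => mul_mem_inadmissibleSpan_of_left hx y)
      (fun _ _ h => sub_mem_inadmissibleSpan_of_aRel h) hx
  · rintro _ ⟨v, hv, rfl⟩
    exact toA_monAB_of_notMem_admissibleWords hg hv

end Quotient

/-- The images in `A_g` (`g ≥ 2`, `n ≥ 2`) of the monomials `u_1 ⋯ u_n` with
each `u_i ∈ {1, a_i(p), b_i(p), ω_i : 1 ≤ p ≤ g}` and at most one `u_i` in
`{a_i(p), b_i(p), ω_i : 2 ≤ p ≤ g}` form an additive (ℚ-vector space) basis of `A_g`. -/
theorem stmt5 (n g : ℕ) [NeZero n] [NeZero g] (hn : 2 ≤ n) (hg : 2 ≤ g) :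
    LinearIndependent ℚ (basisFunAB n g) ∧
      Submodule.span ℚ (Set.range (basisFunAB n g)) = ⊤ := by
  constructor
  · exact linearIndependent_comp_subtype_of_ker_eq_span_compl (f := (toA n g).toLinearMap)
      linearIndependent_monAB (ker_toA hg)
  · exact span_range_comp_subtype_eq_top_of_ker_eq_span_compl (f := (toA n g).toLinearMap)
      span_range_monAB toA_surjective (ker_toA hg)
end

section
/- Let B_g = A_g / J_g (g ≥ 2, n ≥ 2), where J_g is the A_g-ideal generated by all products x_i y_j with i, j ∈ {2,…,n}. Then the B_g-images of the two elements ω_1 x_2 ⋯ x_n and ω_1 y_2 ⋯ y_n are linearly independent over ℚ. -/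
/-- The relations defining `B_g = A_g / J_g`: all products `x_i y_j` with
`i, j ∈ {2,…,n}` (including `i = j`) are set to zero. -/
inductive BRel (n g : ℕ) [NeZero n] [NeZero g] : SurfA n g → SurfA n g → Prop
  | mk (i j : Fin n) : i ≠ 0 → j ≠ 0 → BRel n g (xA i * yA j) 0

/-- The algebra `B_g = A_g / J_g`. -/
def SurfB (n g : ℕ) [NeZero n] [NeZero g] : Type := RingQuot (BRel n g)

noncomputable instance (n g : ℕ) [NeZero n] [NeZero g] : Ring (SurfB n g) :=
  inferInstanceAs (Ring (RingQuot (BRel n g)))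

noncomputable instance (n g : ℕ) [NeZero n] [NeZero g] : Algebra ℚ (SurfB n g) :=
  inferInstanceAs (Algebra ℚ (RingQuot (BRel n g)))

/-- The quotient map `A_g → B_g`. -/
noncomputable def toB (n g : ℕ) [NeZero n] [NeZero g] : SurfA n g →ₐ[ℚ] SurfB n g :=
  RingQuot.mkAlgHom ℚ (BRel n g)

/-- The image of `ω_1 x_2 ⋯ x_n` in `B_g`. -/
noncomputable def elt1 (n g : ℕ) [NeZero n] [NeZero g] : SurfB n g :=
  toB n g (toA n g ((List.ofFn fun i : Fin n => if i = 0 then gW i else gX i 0).prod))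

/-- The image of `ω_1 y_2 ⋯ y_n` in `B_g`. -/
noncomputable def elt2 (n g : ℕ) [NeZero n] [NeZero g] : SurfB n g :=
  toB n g (toA n g ((List.ofFn fun i : Fin n => if i = 0 then gW i else gY i 0).prod))

/-!
Collapse one letter `c` of `{a, b}` on the first handle: send every `c_i(1)` to the same vector, and
the remaining generators to independent vectors of an exterior algebra `Λ`. Then `x_i y_j = 0` for
`i, j ≥ 2`, and it remains to impose the other relations of `B_g` without losing the product of
`ω_1` with the uncollapsed letters. To do so, divide `Λ` by the annihilator of the Macaulay dual
generator `L = ∏ (a_i(p) b_i(p) + ω_i)`, the product over all `i` and all `p ≥ 2`. Its factors are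
even, hence central, and `ω_i ω_j = 0` because both contain the collapsed vector. Consequently a
single factor kills `a_i(p) b_i(p) - ω_i` and every product of a generator on the `p`-th handle of
the `i`-th surface with one on its first handle, while two factors kill the product of generators on
two different handles outside the first ones. On the other hand, contracting against the dual
vectors of `a_i(p)` and `b_i(p)` strips the factors of `L` off one at a time, so `L` does not kill
the product of `ω_1` with the uncollapsed letters. Thus collapsing a letter kills exactly one of the
two elements, and the two choices of the letter separate them.
-/

section CentralTorsion

variable {Z A : Type*} [CommRing Z] [Ring A] [Algebra Z A]

/-- The annihilator of a scalar `z` in a `Z`-algebra `A`, as an ideal of the possibly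
noncommutative ring `A`. It serves to pass to the quotient of an exterior algebra by the
annihilator of a central element. -/
def torsionIdeal (A : Type*) [Ring A] [Algebra Z A] (z : Z) : Ideal A where
  carrier := {x | z • x = 0}
  add_mem' {x y} (hx : z • x = 0) (hy : z • y = 0) := by
    simp only [Set.mem_ofPred_eq, smul_add, hx, hy, add_zero]
  zero_mem' := smul_zero z
  smul_mem' a x (hx : z • x = 0) := by
    simp only [Set.mem_ofPred_eq, smul_eq_mul, ← mul_smul_comm, hx, mul_zero]

theorem mem_torsionIdeal {z : Z} {x : A} : x ∈ torsionIdeal A z ↔ z • x = 0 := Iff.rfl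

instance torsionIdeal_isTwoSided (z : Z) : (torsionIdeal A z).IsTwoSided where
  mul_mem_of_left {x} y hx := by
    rw [mem_torsionIdeal] at hx ⊢
    rw [← smul_mul_assoc, hx, zero_mul]

theorem torsionIdeal_le_of_dvd {y z : Z} (h : y ∣ z) : torsionIdeal A y ≤ torsionIdeal A z := by
  obtain ⟨w, rfl⟩ := h
  intro x hx
  rw [mem_torsionIdeal] at hx ⊢
  rw [mul_comm, mul_smul, hx, smul_zero]

end CentralTorsion

section Exterior

open ExteriorAlgebra (ι ι_sq_zero)
open CliffordAlgebra (contractLeft contractLeft_ι_mul)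

variable {R M : Type*} [CommRing R] [AddCommGroup M] [Module R M]

theorem ι_mul_ι_eq_neg (u v : M) : ι R u * ι R v = -(ι R v * ι R u) :=
  eq_neg_of_add_eq_zero_left (ExteriorAlgebra.ι_add_mul_swap u v)

theorem ι_mul_ι_mem_center (u v : M) :
    ι R u * ι R v ∈ Subring.center (ExteriorAlgebra R M) := by
  rw [Subring.mem_center_iff]
  intro x
  induction x using ExteriorAlgebra.induction with
  | algebraMap r => exact Algebra.commutes r _
  | ι w =>
    rw [← mul_assoc, ι_mul_ι_eq_neg w u, neg_mul, mul_assoc, ι_mul_ι_eq_neg w v, mul_neg, neg_neg,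
      mul_assoc]
  | mul x y hx hy => rw [mul_assoc, hy, ← mul_assoc, hx, mul_assoc]
  | add x y hx hy => rw [add_mul, hx, hy, mul_add]

variable (R) in
/-- The bivector `u ∧ v`, regarded as an element of the center of the exterior algebra. As the
center is a commutative ring, bivectors can be multiplied over finite sets there. -/
def bivector (u v : M) : Subring.center (ExteriorAlgebra R M) :=
  ⟨ι R u * ι R v, ι_mul_ι_mem_center u v⟩

theorem bivector_smul (u v : M) (x : ExteriorAlgebra R M) :
    bivector R u v • x = ι R u * (ι R v * x) :=
  mul_assoc _ _ x

theorem bivector_smul_one (u v : M) :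
    bivector R u v • (1 : ExteriorAlgebra R M) = ι R u * ι R v :=
  mul_one _

theorem bivector_smul_ι_left (u v : M) : bivector R u v • ι R u = 0 := by
  rw [bivector_smul, ι_mul_ι_eq_neg v u, mul_neg, ← mul_assoc, ι_sq_zero, zero_mul, neg_zero]

theorem bivector_smul_ι_right (u v : M) : bivector R u v • ι R v = 0 := by
  rw [bivector_smul, ι_sq_zero, mul_zero]

theorem eq_zero_of_smul_one_eq_zero {z : Subring.center (ExteriorAlgebra R M)}
    (h : z • (1 : ExteriorAlgebra R M) = 0) : z = 0 :=
  Subtype.ext ((mul_one _).symm.trans h)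

theorem bivector_mul_bivector_same_left (u v w : M) :
    bivector R u v * bivector R u w = 0 := by
  apply eq_zero_of_smul_one_eq_zero
  rw [mul_smul, bivector_smul_one, ← smul_mul_assoc, bivector_smul_ι_left, zero_mul]

theorem bivector_mul_bivector_same_right (u v w : M) :
    bivector R u w * bivector R v w = 0 := by
  apply eq_zero_of_smul_one_eq_zero
  rw [mul_smul, bivector_smul_one, ← mul_smul_comm, bivector_smul_ι_right, mul_zero]

theorem contractLeft_ι_mul_of_apply_eq_zero {d : Module.Dual R M} {v : M} (hv : d v = 0)
    (x : ExteriorAlgebra R M) : contractLeft d (ι R v * x) = -(ι R v * contractLeft d x) := by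
  rw [contractLeft_ι_mul, hv, zero_smul, zero_sub]

theorem contractLeft_ι_mul_of_contractLeft_eq_zero {d : Module.Dual R M} {x : ExteriorAlgebra R M}
    (hx : contractLeft d x = 0) (v : M) : contractLeft d (ι R v * x) = d v • x := by
  rw [contractLeft_ι_mul, hx, mul_zero, sub_zero]

theorem contractLeft_bivector_smul {d : Module.Dual R M} {u v : M} (hu : d u = 0) (hv : d v = 0)
    (x : ExteriorAlgebra R M) :
    contractLeft d (bivector R u v • x) = bivector R u v • contractLeft d x := by
  rw [bivector_smul, contractLeft_ι_mul_of_apply_eq_zero hu,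
    contractLeft_ι_mul_of_apply_eq_zero hv, mul_neg, neg_neg, bivector_smul]

theorem contractLeft_prod_ι {d : Module.Dual R M} {l : List M} (hl : ∀ v ∈ l, d v = 0) :
    contractLeft d (l.map (ι R)).prod = 0 := by
  induction l with
  | nil => exact CliffordAlgebra.contractLeft_one (Q := 0) d
  | cons v l ih =>
    rw [List.forall_mem_cons] at hl
    rw [List.map_cons, List.prod_cons, contractLeft_ι_mul_of_apply_eq_zero hl.1, ih hl.2, mul_zero,
      neg_zero]

theorem ι_mul_ne_zero {d : Module.Dual R M} {v : M} {x : ExteriorAlgebra R M} (hv : d v = 1)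
    (hd : contractLeft d x = 0) (hx : x ≠ 0) : ι R v * x ≠ 0 := by
  intro h
  apply hx
  rw [← one_smul R x, ← hv, ← contractLeft_ι_mul_of_contractLeft_eq_zero hd, h, map_zero]

theorem prod_ι_single_ne_zero [Nontrivial R] {K : Type*} {l : List K} (hl : l.Nodup) :
    ((l.map fun k => Finsupp.single k (1 : R)).map (ι R)).prod ≠ 0 := by
  induction l with
  | nil => exact one_ne_zero
  | cons k l ih =>
    rw [List.nodup_cons] at hl
    refine ι_mul_ne_zero (d := Finsupp.lapply k) (Finsupp.single_eq_same ..)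
      (contractLeft_prod_ι ?_) (ih hl.2)
    simp only [List.forall_mem_map, Finsupp.lapply_apply]
    exact fun j hj => Finsupp.single_eq_of_ne fun hjk => hl.1 (hjk ▸ hj)

end Exterior

section DualGenerator

open ExteriorAlgebra (ι ι_sq_zero)
open CliffordAlgebra (contractLeft)

variable {R M I P : Type*} [CommRing R] [AddCommGroup M] [Module R M]

theorem bivector_smul_ι (e : Bool → I → P → M) (s : Bool) (i : I) (p : P) :
    bivector R (e false i p) (e true i p) • ι R (e s i p) = 0 := by
  cases s
  · exact bivector_smul_ι_left _ _
  · exact bivector_smul_ι_right _ _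

variable [Zero P] (R) (e : Bool → I → P → M)

/-- The bivector `ω_i = a_i(1) ∧ b_i(1)` of a family of vectors `e`, where `e false i p` and
`e true i p` play the roles of `a_i(p)` and `b_i(p)` and the index `p = 0` that of the first
handle. -/
def omega (i : I) : Subring.center (ExteriorAlgebra R M) :=
  bivector R (e false i 0) (e true i 0)

/-- The factor `a_i(p) ∧ b_i(p) + ω_i` of the dual generator. -/
def dualFactor (i : I) (p : P) : Subring.center (ExteriorAlgebra R M) :=
  bivector R (e false i p) (e true i p) + omega R e i

/-- The Macaulay dual generator: once a letter is collapsed on the first handle, the relations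
between the classes `a_i(p)`, `b_i(p)` in `A_g` hold modulo its annihilator. -/
def dualGenerator [Fintype I] [Fintype P] [DecidableEq P] :
    Subring.center (ExteriorAlgebra R M) :=
  ∏ k : I × P with k.2 ≠ 0, dualFactor R e k.1 k.2

variable {R}

theorem omega_smul_ι (s : Bool) (i : I) : omega R e i • ι R (e s i 0) = 0 :=
  bivector_smul_ι e s i 0

theorem dualFactor_smul_ι (s : Bool) (i : I) (p : P) :
    dualFactor R e i p • ι R (e s i p) = omega R e i • ι R (e s i p) := by
  rw [dualFactor, add_smul, bivector_smul_ι, zero_add]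

variable {e}

theorem omega_mul_omega {c : Bool} {v : M} (hc : ∀ i, e c i 0 = v) (i j : I) :
    omega R e i * omega R e j = 0 := by
  cases c <;> simp only [omega, hc]
  · exact bivector_mul_bivector_same_left _ _ _
  · exact bivector_mul_bivector_same_right _ _ _

theorem dualFactor_smul_ι_mul_ι_zero (s t : Bool) (i : I) (p : P) :
    dualFactor R e i p • (ι R (e s i p) * ι R (e t i 0)) = 0 := by
  rw [← smul_mul_assoc, dualFactor_smul_ι, smul_mul_assoc, ← mul_smul_comm, omega_smul_ι, mul_zero]

theorem dualFactor_mul_dualFactor_smul_ι_mul_ι {c : Bool} {v : M} (hc : ∀ i, e c i 0 = v)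
    (s t : Bool) (i j : I) (p q : P) :
    (dualFactor R e i p * dualFactor R e j q) • (ι R (e s i p) * ι R (e t j q)) = 0 := by
  rw [← smul_mul_smul_comm, dualFactor_smul_ι, dualFactor_smul_ι, smul_mul_smul_comm,
    omega_mul_omega hc, zero_smul]

theorem dualFactor_smul_bivector_sub_omega {c : Bool} {v : M} (hc : ∀ i, e c i 0 = v)
    (i : I) (p : P) :
    dualFactor R e i p • (ι R (e false i p) * ι R (e true i p) -
      ι R (e false i 0) * ι R (e true i 0)) = 0 := by
  have square : bivector R (e false i p) (e true i p) *
      bivector R (e false i p) (e true i p) = 0 := bivector_mul_bivector_same_left _ _ _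
  rw [← bivector_smul_one, ← bivector_smul_one, ← sub_smul, smul_smul, dualFactor, ← omega,
    ← mul_self_sub_mul_self, square, omega_mul_omega hc, sub_self, zero_smul]

section Relations

variable [Fintype I] [Fintype P] [DecidableEq P]

theorem dualFactor_dvd_dualGenerator (i : I) {p : P} (hp : p ≠ 0) :
    dualFactor R e i p ∣ dualGenerator R e :=
  Finset.dvd_prod_of_mem (fun k : I × P => dualFactor R e k.1 k.2) (a := (i, p)) (by simpa)

theorem dualFactor_mul_dualFactor_dvd_dualGenerator {i j : I} {p q : P} (hp : p ≠ 0) (hq : q ≠ 0)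
    (h : (i, p) ≠ (j, q)) :
    dualFactor R e i p * dualFactor R e j q ∣ dualGenerator R e := by
  classical
  rw [← Finset.prod_pair (f := fun k : I × P => dualFactor R e k.1 k.2) h]
  refine Finset.prod_dvd_prod_of_subset _ _ _ ?_
  simp [Finset.insert_subset_iff, hp, hq]

theorem ι_mul_ι_mem_torsionIdeal_of_ne_zero {c : Bool} {v : M} (hc : ∀ i, e c i 0 = v)
    (s t : Bool) {i j : I} {p q : P} (hp : p ≠ 0) (hq : q ≠ 0) (h : (i, p) ≠ (j, q)) :
    ι R (e s i p) * ι R (e t j q) ∈ torsionIdeal _ (dualGenerator R e) :=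
  torsionIdeal_le_of_dvd (dualFactor_mul_dualFactor_dvd_dualGenerator hp hq h)
    (dualFactor_mul_dualFactor_smul_ι_mul_ι hc s t i j p q)

theorem ι_mul_ι_zero_mem_torsionIdeal (s t : Bool) (i : I) {p : P} (hp : p ≠ 0) :
    ι R (e s i p) * ι R (e t i 0) ∈ torsionIdeal _ (dualGenerator R e) :=
  torsionIdeal_le_of_dvd (dualFactor_dvd_dualGenerator i hp)
    (dualFactor_smul_ι_mul_ι_zero s t i p)

theorem ι_mul_ι_mem_torsionIdeal {c : Bool} {v : M} (hc : ∀ i, e c i 0 = v)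
    (s t : Bool) (i : I) {p q : P} (hpq : p ≠ q) :
    ι R (e s i p) * ι R (e t i q) ∈ torsionIdeal _ (dualGenerator R e) := by
  by_cases hp : p = 0
  · subst hp
    rw [ι_mul_ι_eq_neg, neg_mem_iff]
    exact ι_mul_ι_zero_mem_torsionIdeal t s i hpq.symm
  by_cases hq : q = 0
  · subst hq
    exact ι_mul_ι_zero_mem_torsionIdeal s t i hp
  · exact ι_mul_ι_mem_torsionIdeal_of_ne_zero hc s t hp hq fun h => hpq (congrArg Prod.snd h)

theorem bivector_sub_omega_mem_torsionIdeal {c : Bool} {v : M} (hc : ∀ i, e c i 0 = v)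
    (i : I) (p : P) :
    ι R (e false i p) * ι R (e true i p) - ι R (e false i 0) * ι R (e true i 0) ∈
      torsionIdeal _ (dualGenerator R e) := by
  by_cases hp : p = 0
  · rw [hp, sub_self]
    exact zero_mem _
  · exact torsionIdeal_le_of_dvd (dualFactor_dvd_dualGenerator i hp)
      (dualFactor_smul_bivector_sub_omega hc i p)

end Relations

section Nonvanishing

theorem contractLeft_dualFactor_smul {d : Module.Dual R M} {i : I} {p : P}
    (hp : ∀ s, d (e s i p) = 0) (h0 : ∀ s, d (e s i 0) = 0) (x : ExteriorAlgebra R M) :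
    contractLeft d (dualFactor R e i p • x) = dualFactor R e i p • contractLeft d x := by
  rw [dualFactor, add_smul, add_smul, map_add, omega, contractLeft_bivector_smul (hp _) (hp _),
    contractLeft_bivector_smul (h0 _) (h0 _)]

theorem contractLeft_prod_dualFactor_smul {d : Module.Dual R M} {S : Finset (I × P)}
    (hS : ∀ k ∈ S, ∀ s, d (e s k.1 k.2) = 0) (h0 : ∀ s i, d (e s i 0) = 0)
    (x : ExteriorAlgebra R M) :
    contractLeft d ((∏ k ∈ S, dualFactor R e k.1 k.2) • x) =
      (∏ k ∈ S, dualFactor R e k.1 k.2) • contractLeft d x := by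
  classical
  induction S using Finset.induction_on with
  | empty => simp only [Finset.prod_empty, one_smul]
  | insert k S hk ih =>
    rw [Finset.forall_mem_insert] at hS
    rw [Finset.prod_insert hk, mul_smul, mul_smul,
      contractLeft_dualFactor_smul hS.1 fun s => h0 s k.1, ih hS.2]

theorem dualFactor_smul_ne_zero {d : Bool → Module.Dual R M} {i : I} {p : P}
    {x : ExteriorAlgebra R M} (hp : ∀ s t, d s (e t i p) = if s = t then 1 else 0)
    (h0 : ∀ s t, d s (e t i 0) = 0) (hd : ∀ s, contractLeft (d s) x = 0) (hx : x ≠ 0) :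
    dualFactor R e i p • x ≠ 0 := by
  have contract_omega (s) : contractLeft (d s) (omega R e i • x) = 0 := by
    rw [omega, contractLeft_bivector_smul (h0 s _) (h0 s _), hd, smul_zero]
  have contract_true : contractLeft (d false) (ι R (e true i p) * x) = 0 := by
    simp [contractLeft_ι_mul_of_contractLeft_eq_zero (hd false), hp]
  have contract_false :
      contractLeft (d false) (dualFactor R e i p • x) = ι R (e true i p) * x := by
    simp [dualFactor, add_smul, contract_omega, bivector_smul,
      contractLeft_ι_mul_of_contractLeft_eq_zero contract_true, hp]
  intro h
  rw [h, map_zero] at contract_false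
  exact ι_mul_ne_zero (by simp [hp]) (hd true) hx contract_false.symm

theorem dualGenerator_smul_ne_zero [Fintype I] [Fintype P] [DecidableEq I] [DecidableEq P]
    {d : Bool → I → P → Module.Dual R M} {x : ExteriorAlgebra R M}
    (hde : ∀ s i p, p ≠ 0 → ∀ t j q, d s i p (e t j q) = if (s, i, p) = (t, j, q) then 1 else 0)
    (hd : ∀ s i p, p ≠ 0 → contractLeft (d s i p) x = 0) (hx : x ≠ 0) :
    dualGenerator R e • x ≠ 0 := by
  suffices ∀ S : Finset (I × P), (∀ k ∈ S, k.2 ≠ 0) →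
      (∏ k ∈ S, dualFactor R e k.1 k.2) • x ≠ 0 from
    this _ fun k hk => (Finset.mem_filter.mp hk).2
  intro S hS
  induction S using Finset.induction_on with
  | empty => simpa only [Finset.prod_empty, one_smul]
  | insert k S hk ih =>
    rw [Finset.forall_mem_insert] at hS
    obtain ⟨hk0, hS⟩ := hS
    have apply_zero (s t j) : d s k.1 k.2 (e t j 0) = 0 := by
      rw [hde _ _ _ hk0, if_neg fun h => hk0 (congrArg (·.2.2) h)]
    have apply_of_mem (s) : ∀ j ∈ S, ∀ t, d s k.1 k.2 (e t j.1 j.2) = 0 := fun j hj t => by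
      have hkj : k ≠ j := fun h => hk (h ▸ hj)
      rw [hde _ _ _ hk0, if_neg fun h => hkj (congrArg Prod.snd h)]
    rw [Finset.prod_insert hk, mul_smul]
    refine dualFactor_smul_ne_zero (d := fun s => d s k.1 k.2) (fun s t => ?_)
      (fun s t => apply_zero s t k.1) (fun s => ?_) (ih hS)
    · simp [hde _ _ _ hk0]
    · rw [contractLeft_prod_dualFactor_smul (apply_of_mem s) (apply_zero s), hd s _ _ hk0,
        smul_zero]

end Nonvanishing

end DualGenerator

section UniversalProperty

variable {n g : ℕ} [NeZero n] [NeZero g] {S : Type*} [Ring S]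

/-- The elements `e false i p`, `e true i p` of a ring satisfy the relations that the classes
`a_i(p)`, `b_i(p)` satisfy in `B_g`, with `ω_i` encoded as `e false i 0 * e true i 0`. Such families
in a `ℚ`-algebra `S` correspond to algebra maps `B_g → S`. -/
structure IsSurfFamily (e : Bool → Fin n → Fin g → S) : Prop where
  anticomm : ∀ s t i j p q, e s i p * e t j q = -(e t j q * e s i p)
  mul_self : ∀ s i p, e s i p * e s i p = 0
  mul_of_ne : ∀ s t i p q, p ≠ q → e s i p * e t i q = 0
  mul_eq_mul_zero : ∀ i p, e false i p * e true i p = e false i 0 * e true i 0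
  cross : ∀ s t i j p q, i ≠ j → p ≠ 0 → q ≠ 0 → e s i p * e t j q = 0
  sub_mul_sub : ∀ i j, (e false i 0 - e false 0 0) * (e true j 0 - e true 0 0) = 0

/-- The element of a ring assigned to a generator of the cohomology of `Σ_g^{×n}` by a family of
elements assigned to the classes of degree one. -/
def genValue (e : Bool → Fin n → Fin g → S) : SurfGen n g → S
  | .a i p => e false i p
  | .b i p => e true i p
  | .w i => e false i 0 * e true i 0

namespace IsSurfFamily

variable {e : Bool → Fin n → Fin g → S}

theorem commute_mul (h : IsSurfFamily e) (s t u : Bool) (i j k : Fin n) (p q r : Fin g) :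
    Commute (e s i p * e t j q) (e u k r) := by
  rw [Commute, SemiconjBy, mul_assoc, h.anticomm t u, mul_neg, ← mul_assoc, h.anticomm s u, neg_mul,
    neg_neg, mul_assoc]

theorem mul_same_letter (h : IsSurfFamily e) (s : Bool) (i : Fin n) (p q : Fin g) :
    e s i p * e s i q = 0 := by
  rcases eq_or_ne p q with rfl | hpq
  · exact h.mul_self s i p
  · exact h.mul_of_ne s s i p q hpq

variable [Algebra ℚ S]

theorem genValue_mul_genValue (h : IsSurfFamily e) (u v : SurfGen n g) :
    genValue e u * genValue e v =
      ((-1 : ℚ) ^ (u.deg * v.deg)) • (genValue e v * genValue e u) := by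
  have commute_omega (i : Fin n) (v : SurfGen n g) :
      Commute (e false i 0 * e true i 0) (genValue e v) := by
    cases v
    · exact h.commute_mul ..
    · exact h.commute_mul ..
    · exact (h.commute_mul ..).mul_right (h.commute_mul ..)
  cases u with
  | w i => simpa [genValue, SurfGen.deg, pow_mul] using (commute_omega i v).eq
  | a i p =>
    cases v with
    | w j => simpa [genValue, SurfGen.deg] using (commute_omega j (.a i p)).eq.symm
    | _ => simpa [genValue, SurfGen.deg] using h.anticomm ..
  | b i p =>
    cases v with
    | w j => simpa [genValue, SurfGen.deg] using (commute_omega j (.b i p)).eq.symm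
    | _ => simpa [genValue, SurfGen.deg] using h.anticomm ..

theorem freeAlgebra_lift_eq_of_surfRel (h : IsSurfFamily e) ⦃x y : FreeAlgebra ℚ (SurfGen n g)⦄
    (r : SurfRel n g x y) :
    FreeAlgebra.lift ℚ (genValue e) x = FreeAlgebra.lift ℚ (genValue e) y := by
  cases r with
  | aa i p q => simpa [genValue] using h.mul_same_letter false i p q
  | bb i p q => simpa [genValue] using h.mul_same_letter true i p q
  | ab_eq i p => simpa [genValue] using h.mul_eq_mul_zero i p
  | ab_ne i p q hpq => simpa [genValue] using h.mul_of_ne false true i p q hpq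
  | koszul u v => simpa using h.genValue_mul_genValue u v

variable (h : IsSurfFamily e)

/-- The map from the cohomology of `Σ_g^{×n}` induced by a family satisfying the relations. -/
noncomputable def liftCoh : SurfCoh n g →ₐ[ℚ] S :=
  RingQuot.liftAlgHom ℚ ⟨FreeAlgebra.lift ℚ (genValue e), h.freeAlgebra_lift_eq_of_surfRel⟩

theorem liftCoh_gA (i : Fin n) (p : Fin g) : h.liftCoh (gA i p) = e false i p :=
  (RingQuot.liftAlgHom_mkAlgHom_apply ℚ _ h.freeAlgebra_lift_eq_of_surfRel _).trans
    (FreeAlgebra.lift_ι_apply _ _)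

theorem liftCoh_gB (i : Fin n) (p : Fin g) : h.liftCoh (gB i p) = e true i p :=
  (RingQuot.liftAlgHom_mkAlgHom_apply ℚ _ h.freeAlgebra_lift_eq_of_surfRel _).trans
    (FreeAlgebra.lift_ι_apply _ _)

theorem liftCoh_gW (i : Fin n) : h.liftCoh (gW i) = e false i 0 * e true i 0 :=
  (RingQuot.liftAlgHom_mkAlgHom_apply ℚ _ h.freeAlgebra_lift_eq_of_surfRel _).trans
    (FreeAlgebra.lift_ι_apply _ _)

theorem liftCoh_gX (i : Fin n) (p : Fin g) :
    h.liftCoh (gX i p) =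
      if p = 0 ∧ i ≠ 0 then e false i p - e false 0 p else e false i p := by
  rw [gX, apply_ite h.liftCoh, map_sub, liftCoh_gA, liftCoh_gA]

theorem liftCoh_gY (i : Fin n) (p : Fin g) :
    h.liftCoh (gY i p) =
      if p = 0 ∧ i ≠ 0 then e true i p - e true 0 p else e true i p := by
  rw [gY, apply_ite h.liftCoh, map_sub, liftCoh_gB, liftCoh_gB]

theorem liftCoh_eq_of_aRel ⦃x y : SurfCoh n g⦄ (r : ARel n g x y) :
    h.liftCoh x = h.liftCoh y := by
  cases r with
  | xx i j p q hij hp hq =>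
    simpa [liftCoh_gX, hp, hq] using h.cross false false i j p q hij hp hq
  | xy i j p q hij hp hq =>
    simpa [liftCoh_gX, liftCoh_gY, hp, hq] using h.cross false true i j p q hij hp hq
  | yy i j p q hij hp hq =>
    simpa [liftCoh_gY, hp, hq] using h.cross true true i j p q hij hp hq

/-- The map from `A_g` induced by a family satisfying the relations. -/
noncomputable def liftA : SurfA n g →ₐ[ℚ] S :=
  RingQuot.liftAlgHom ℚ ⟨h.liftCoh, h.liftCoh_eq_of_aRel⟩

theorem liftA_toA (x : SurfCoh n g) : h.liftA (toA n g x) = h.liftCoh x :=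
  RingQuot.liftAlgHom_mkAlgHom_apply ℚ _ h.liftCoh_eq_of_aRel x

theorem liftA_eq_of_bRel ⦃x y : SurfA n g⦄ (r : BRel n g x y) : h.liftA x = h.liftA y := by
  obtain ⟨i, j, hi, hj⟩ := r
  simpa [xA, yA, liftA_toA, liftCoh_gX, liftCoh_gY, hi, hj] using h.sub_mul_sub i j

/-- The map from `B_g` induced by a family satisfying the relations. -/
noncomputable def lift : SurfB n g →ₐ[ℚ] S :=
  RingQuot.liftAlgHom ℚ ⟨h.liftA, h.liftA_eq_of_bRel⟩

theorem lift_toB (x : SurfA n g) : h.lift (toB n g x) = h.liftA x :=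
  RingQuot.liftAlgHom_mkAlgHom_apply ℚ _ h.liftA_eq_of_bRel x

end IsSurfFamily

/-- The element `ω_1 x_2 ⋯ x_n` of `B_g` for the letter `false`, and `ω_1 y_2 ⋯ y_n` for the letter
`true`. -/
noncomputable def letterElt (n g : ℕ) [NeZero n] [NeZero g] : Bool → SurfB n g
  | false => elt1 n g
  | true => elt2 n g

theorem IsSurfFamily.lift_letterElt [Algebra ℚ S] {e : Bool → Fin n → Fin g → S}
    (h : IsSurfFamily e) (s : Bool) :
    h.lift (letterElt n g s) =
      (List.ofFn fun i => if i = 0 then e false 0 0 * e true 0 0 else e s i 0 - e s 0 0).prod := by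
  have lift_factors (x : Fin n → SurfCoh n g) :
      h.lift (toB n g (toA n g (List.ofFn x).prod)) =
        (List.ofFn fun i => h.liftCoh (x i)).prod := by
    rw [h.lift_toB, h.liftA_toA, map_list_prod, List.map_ofFn, Function.comp_def]
  cases s
  · simp_rw [letterElt, elt1, lift_factors, apply_ite h.liftCoh, h.liftCoh_gW, h.liftCoh_gX]
    congr! 3 with i
    by_cases hi : i = 0 <;> simp [hi]
  · simp_rw [letterElt, elt2, lift_factors, apply_ite h.liftCoh, h.liftCoh_gW, h.liftCoh_gY]
    congr! 3 with i
    by_cases hi : i = 0 <;> simp [hi]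

end UniversalProperty

section Collapse

open ExteriorAlgebra (ι ι_sq_zero)

variable {n g : ℕ} [NeZero n] [NeZero g]

/-- The quotient of the exterior algebra by the annihilator of the dual generator. It is the target
of the map from `B_g` that collapses a letter. -/
abbrev DualGeneratorQuotient {M : Type*} [AddCommGroup M] [Module ℚ M]
    (e : Bool → Fin n → Fin g → M) : Type _ :=
  ExteriorAlgebra ℚ M ⧸ torsionIdeal (ExteriorAlgebra ℚ M) (dualGenerator ℚ e)

theorem isSurfFamily_mk_ι {M : Type*} [AddCommGroup M] [Module ℚ M] {e : Bool → Fin n → Fin g → M}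
    {c : Bool} {v : M} (hc : ∀ i, e c i 0 = v) :
    IsSurfFamily fun s i p => (Ideal.Quotient.mk _ (ι ℚ (e s i p)) : DualGeneratorQuotient e) where
  anticomm s t i j p q := by rw [← map_mul, ι_mul_ι_eq_neg, map_neg, map_mul]
  mul_self s i p := by rw [← map_mul, ι_sq_zero, map_zero]
  mul_of_ne s t i p q hpq := by
    rw [← map_mul, Ideal.Quotient.eq_zero_iff_mem]
    exact ι_mul_ι_mem_torsionIdeal hc s t i hpq
  mul_eq_mul_zero i p := by
    rw [← map_mul (Ideal.Quotient.mk _), ← map_mul (Ideal.Quotient.mk _), Ideal.Quotient.eq]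
    exact bivector_sub_omega_mem_torsionIdeal hc i p
  cross s t i j p q hij hp hq := by
    rw [← map_mul, Ideal.Quotient.eq_zero_iff_mem]
    exact ι_mul_ι_mem_torsionIdeal_of_ne_zero hc s t hp hq fun h => hij (congrArg Prod.fst h)
  sub_mul_sub i j := by
    cases c
    · rw [hc i, hc 0, sub_self, zero_mul]
    · rw [hc j, hc 0, sub_self, mul_zero]

/-- The family of vectors that collapses the letter `c` on the first handle: the vectors attached to
`c_i(1)` all agree. The basis vectors are normalised so that the vector of the other letter at
`x_i`, `i ≥ 2`, is a basis vector. -/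
noncomputable def collapsedVec (c s : Bool) (i : Fin n) (p : Fin g) :
    Bool × Fin n × Fin g →₀ ℚ :=
  if p = 0 ∧ i ≠ 0 then (if s = c then 0 else .single (s, i, 0) 1) + .single (s, 0, 0) 1
  else .single (s, i, p) 1

theorem collapsedVec_zero_zero (c s : Bool) :
    collapsedVec c s (0 : Fin n) (0 : Fin g) = .single (s, 0, 0) 1 := by
  simp [collapsedVec]

theorem collapsedVec_self_zero (c : Bool) (i : Fin n) :
    collapsedVec c c i (0 : Fin g) = .single (c, 0, 0) 1 := by
  by_cases hi : i = 0 <;> simp [collapsedVec, hi]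

theorem collapsedVec_sub_single {c s : Bool} (hs : s ≠ c) {i : Fin n} (hi : i ≠ 0) :
    collapsedVec c s i (0 : Fin g) - .single (s, 0, 0) 1 = .single (s, i, 0) 1 := by
  simp [collapsedVec, hs, hi]

theorem collapsedVec_apply (c s t : Bool) (i j : Fin n) {p : Fin g} (hp : p ≠ 0) (q : Fin g) :
    collapsedVec c t j q (s, i, p) = if (s, i, p) = (t, j, q) then 1 else 0 := by
  by_cases hq : q = 0
  · subst hq
    by_cases hj : j = 0 <;> by_cases ht : t = c <;> simp [collapsedVec, hp, hj, ht]
  · simp [collapsedVec, hq, Finsupp.single_apply, eq_comm]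

variable (n g) in
/-- The map from `B_g` to the quotient of an exterior algebra that collapses the letter `c` on the
first handle. -/
noncomputable def collapse (c : Bool) :
    SurfB n g →ₐ[ℚ] DualGeneratorQuotient (n := n) (g := g) (collapsedVec c) :=
  (isSurfFamily_mk_ι (collapsedVec_self_zero c)).lift

theorem collapse_letterElt_self (hn : 2 ≤ n) (c : Bool) :
    collapse n g c (letterElt n g c) = 0 := by
  rw [collapse, IsSurfFamily.lift_letterElt]
  apply List.prod_eq_zero
  rw [List.mem_ofFn]
  have one_ne_zero : (⟨1, hn⟩ : Fin n) ≠ 0 := by simp [Fin.ext_iff]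
  exact ⟨⟨1, hn⟩, by simp [one_ne_zero, collapsedVec_self_zero]⟩

/-- The indices of the basis vectors whose product represents the element `letterElt (n + 1) g s`
once the other letter is collapsed. -/
def letterIndices (n g : ℕ) [NeZero g] (s : Bool) : List (Bool × Fin (n + 1) × Fin g) :=
  (false, 0, 0) :: (true, 0, 0) :: List.ofFn fun i : Fin n => (s, i.succ, 0)

theorem letterIndices_nodup (n g : ℕ) [NeZero g] (s : Bool) : (letterIndices n g s).Nodup := by
  have nodup_ofFn : (List.ofFn fun i : Fin n => (s, i.succ, (0 : Fin g))).Nodup :=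
    List.nodup_ofFn.mpr fun i j h => by simpa using h
  simpa [letterIndices, List.mem_ofFn] using nodup_ofFn

theorem eq_zero_of_mem_letterIndices {n g : ℕ} [NeZero g] {s : Bool}
    {k : Bool × Fin (n + 1) × Fin g} (hk : k ∈ letterIndices n g s) : k.2.2 = 0 := by
  simp only [letterIndices, List.mem_cons, List.mem_ofFn] at hk
  obtain rfl | rfl | ⟨i, rfl⟩ := hk <;> rfl

theorem collapse_letterElt {n : ℕ} {c s : Bool} (hs : s ≠ c) :
    collapse (n + 1) g c (letterElt (n + 1) g s) =
      Ideal.Quotient.mk _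
        (((letterIndices n g s).map fun k => Finsupp.single k (1 : ℚ)).map (ι ℚ)).prod := by
  rw [collapse, IsSurfFamily.lift_letterElt, map_list_prod]
  simp [letterIndices, List.ofFn_succ, collapsedVec_zero_zero, mul_assoc, ← map_sub,
    collapsedVec_sub_single hs (Fin.succ_ne_zero _), Function.comp_def]

theorem collapse_letterElt_ne_zero {c s : Bool} (hs : s ≠ c) :
    collapse n g c (letterElt n g s) ≠ 0 := by
  obtain ⟨m, rfl⟩ := Nat.exists_eq_succ_of_ne_zero (NeZero.ne n)
  rw [collapse_letterElt hs, Ne, Ideal.Quotient.eq_zero_iff_mem, mem_torsionIdeal]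
  refine dualGenerator_smul_ne_zero (d := fun t i p => Finsupp.lapply (t, i, p))
    (fun t i p hp t' j q => collapsedVec_apply c t t' i j hp q)
    (fun t i p hp => contractLeft_prod_ι ?_) (prod_ι_single_ne_zero (letterIndices_nodup m g s))
  rw [List.forall_mem_map]
  exact fun k hk => Finsupp.single_eq_of_ne fun h =>
    hp (eq_zero_of_mem_letterIndices (h ▸ hk))

end Collapse

theorem stmt12_general (n g : ℕ) [NeZero n] [NeZero g] (hn : 2 ≤ n) :
    LinearIndependent ℚ ![elt1 n g, elt2 n g] := by
  rw [LinearIndependent.pair_iff]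
  intro r s h
  change r • letterElt n g false + s • letterElt n g true = 0 at h
  constructor
  · have hr := congrArg (collapse n g true) h
    rw [map_add, map_smul, map_smul, collapse_letterElt_self hn, smul_zero, add_zero,
      map_zero] at hr
    exact (smul_eq_zero.mp hr).resolve_right (collapse_letterElt_ne_zero Bool.false_ne_true)
  · have hs := congrArg (collapse n g false) h
    rw [map_add, map_smul, map_smul, collapse_letterElt_self hn, smul_zero, zero_add,
      map_zero] at hs
    exact (smul_eq_zero.mp hs).resolve_right (collapse_letterElt_ne_zero Bool.false_ne_true.symm)

/-- In `B_g = A_g / J_g` (`g ≥ 2`, `n ≥ 2`), the images of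
`ω_1 x_2 ⋯ x_n` and `ω_1 y_2 ⋯ y_n` are linearly independent over `ℚ`. -/
theorem stmt12 (n g : ℕ) [NeZero n] [NeZero g] (hn : 2 ≤ n) (hg : 2 ≤ g) :
    LinearIndependent ℚ ![elt1 n g, elt2 n g] :=
  stmt12_general n g hn
end

section
/- For s ≥ 2, the s-th zero-divisor cup-length of H*(ℝP³; ℤ/2) equals 3(s−1); that is, there exist 3(s−1) elements in the kernel of the s-fold multiplication map H*(ℝP³; ℤ/2)^{⊗s} → H*(ℝP³; ℤ/2) whose product is nonzero, and no longer such nonzero product exists. -/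
open scoped TensorProduct

/-- `H^*(ℝP³; ℤ/2) ≅ (ℤ/2)[t]/(t⁴)`. -/
noncomputable abbrev CohRP3 : Type :=
  Polynomial (ZMod 2) ⧸ Ideal.span {(Polynomial.X : Polynomial (ZMod 2)) ^ 4}

/-- The iterated multiplication `μ_s : A^{⊗s} → A` for `A = H^*(ℝP³; ℤ/2)`. -/
noncomputable def muRP3 (s : ℕ) : (⨂[ZMod 2] _ : Fin s, CohRP3) →ₗ[ZMod 2] CohRP3 :=
  PiTensorProduct.lift (MultilinearMap.mkPiAlgebraFin (ZMod 2) s CohRP3)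

/-!
Let `q = p ^ m`, and let `A` be free over `R` on `1, a, …, a ^ (q - 1)` with `a ^ q = 0`, where `R`
has characteristic `p`. Write `a_i` for `a` placed in the `i`-th factor of the tensor power. The
kernel of the multiplication is generated by the differences `a_i - a_{i₀}` for `i ≠ i₀`, and the
Frobenius kills their `q`-th powers, so by the pigeonhole principle every product of more than
`(q - 1) (s - 1)` zero-divisors vanishes. Conversely `a_{i₀} ^ (q - 1)` annihilates `a_{i₀}`, so
multiplying `∏ (a_i - a_{i₀}) ^ (q - 1)` by it gives `a ^ (q - 1) ⊗ ⋯ ⊗ a ^ (q - 1)`, a vector of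
the tensor power basis. For `ℝP³`, `R = ℤ/2` and `q = 2 ^ 2`.
-/

open PiTensorProduct

section Nilpotency

variable {B κ α : Type*} [Fintype κ] [Fintype α]

lemma prod_comp_eq_zero_of_pow_eq_zero [CommMonoidWithZero B] {y : κ → B} {q : ℕ}
    (hy : ∀ j, y j ^ q = 0) (f : α → κ) (hα : Fintype.card κ * (q - 1) < Fintype.card α) :
    ∏ k, y (f k) = 0 := by
  classical
  obtain ⟨j, hj⟩ := Fintype.exists_lt_card_fiber_of_mul_lt_card f hα
  rw [← Finset.prod_fiberwise' Finset.univ f y]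
  refine Finset.prod_eq_zero (Finset.mem_univ j) ?_
  rw [Finset.prod_const]
  exact pow_eq_zero_of_le (by lia) (hy j)

lemma prod_eq_zero_of_mem_span_range [CommSemiring B] {y : κ → B} {q : ℕ}
    (hy : ∀ j, y j ^ q = 0) {z : α → B} (hz : ∀ k, z k ∈ Ideal.span (Set.range y))
    (hα : Fintype.card κ * (q - 1) < Fintype.card α) : ∏ k, z k = 0 := by
  classical
  choose c hc using fun k => Ideal.mem_span_range_iff_exists_fun.mp (hz k)
  simp_rw [← hc, Finset.prod_univ_sum, Finset.prod_mul_distrib]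
  exact Finset.sum_eq_zero fun f _ => by
    rw [prod_comp_eq_zero_of_pow_eq_zero hy f hα, mul_zero]

lemma mul_sub_pow_of_mul_eq_zero [CommRing B] {c y : B} (hcy : c * y = 0) (x : B) (n : ℕ) :
    c * (x - y) ^ n = c * x ^ n := by
  induction n with
  | zero => simp only [pow_zero]
  | succ n ih => linear_combination (x - y) * ih - x ^ n * hcy

lemma mul_prod_sub_pow_of_mul_eq_zero [CommRing B] {c y : B} (hcy : c * y = 0) (x : κ → B)
    (n : ℕ) : c * ∏ j, (x j - y) ^ n = c * ∏ j, x j ^ n := by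
  classical
  induction (Finset.univ : Finset κ) using Finset.induction_on with
  | empty => simp only [Finset.prod_empty]
  | insert j s hj ih =>
    rw [Finset.prod_insert hj, Finset.prod_insert hj]
    linear_combination x j ^ n * ih +
      (∏ i ∈ s, (x i - y) ^ n) * mul_sub_pow_of_mul_eq_zero hcy (x j) n

end Nilpotency

section IteratedMul

variable (R A ι : Type*) [CommSemiring R] [CommSemiring A] [Algebra R A] [Fintype ι]

/-- The iterated multiplication `A^{⊗ι} → A`, as a homomorphism of algebras. The factors are
indexed by a finite type, their order being irrelevant since `A` is commutative. -/
noncomputable def iteratedMul : (⨂[R] _ : ι, A) →ₐ[R] A :=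
  liftAlgHom (MultilinearMap.mkPiAlgebra R ι A) (by simp) (by simp [Finset.prod_mul_distrib])

/-- The numbers `t` such that some `t` zero-divisors, i.e. elements of the kernel of the iterated
multiplication, have nonzero product. The zero-divisor cup-length is the greatest of them. -/
def zeroDivisorCupLengths : Set ℕ :=
  {t | ∃ z : Fin t → ⨂[R] _ : ι, A, (∀ k, iteratedMul R A ι (z k) = 0) ∧ ∏ k, z k ≠ 0}

variable {R A ι}

lemma iteratedMul_tprod (a : ι → A) : iteratedMul R A ι (tprod R a) = ∏ i, a i :=
  (lift.tprod a).trans (MultilinearMap.mkPiAlgebra_apply ..)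

lemma lift_mkPiAlgebraFin_apply {n : ℕ} (x : ⨂[R] _ : Fin n, A) :
    lift (MultilinearMap.mkPiAlgebraFin R n A) x = iteratedMul R A (Fin n) x := by
  refine DFunLike.congr_fun (g := (iteratedMul R A (Fin n)).toLinearMap) ?_ x
  ext a
  simp [iteratedMul_tprod, List.prod_ofFn]

lemma card_mem_zeroDivisorCupLengths {α : Type*} [Fintype α] {z : α → ⨂[R] _ : ι, A}
    (hz : ∀ k, iteratedMul R A ι (z k) = 0) (hprod : ∏ k, z k ≠ 0) :
    Fintype.card α ∈ zeroDivisorCupLengths R A ι := by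
  refine ⟨z ∘ (Fintype.equivFin α).symm, fun k => hz _, ?_⟩
  simpa only [Function.comp_apply, Equiv.prod_comp _ z] using hprod

variable (R A ι) in
omit [Fintype ι] in
lemma algebraMap_piTensorProduct_injective [FaithfulSMul R A] [Finite ι] :
    Function.Injective (algebraMap R (⨂[R] _ : ι, A)) := by
  cases nonempty_fintype ι
  refine Function.Injective.of_comp (f := iteratedMul R A ι) ?_
  rw [← AlgHom.coe_toRingHom, ← RingHom.coe_comp, AlgHom.comp_algebraMap]
  exact FaithfulSMul.algebraMap_injective R A

variable [DecidableEq ι]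

lemma iteratedMul_singleAlgHom (i : ι) (a : A) :
    iteratedMul R A ι (singleAlgHom i a) = a := by
  rw [singleAlgHom_apply, iteratedMul_tprod]
  simp

lemma tprod_eq_prod_singleAlgHom {A : ι → Type*} [∀ i, CommSemiring (A i)] [∀ i, Algebra R (A i)]
    (a : ∀ i, A i) : tprod R a = ∏ i, singleAlgHom (R := R) i (a i) := by
  simp only [singleAlgHom_apply, MonoidHom.mulSingle_apply]
  rw [← tprod_prod, Finset.univ_prod_mulSingle]

end IteratedMul

section SingleDiff

variable {R A ι : Type*} [CommRing R] [CommRing A] [Algebra R A] [Fintype ι] [DecidableEq ι]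

variable (R) in
/-- The zero-divisor `a_i - a_{i₀}`, where `a_i` is the pure tensor with `a` in the `i`-th factor
and `1` in all others. These elements generate the kernel of the multiplication, as `a` runs over
generators of `A` and `i` over the factors, and the base factor `i₀` is fixed. -/
noncomputable def singleDiff (i₀ : ι) (a : A) (i : ι) : ⨂[R] _ : ι, A :=
  singleAlgHom i a - singleAlgHom i₀ a

lemma iteratedMul_singleDiff (i₀ : ι) (a : A) (i : ι) :
    iteratedMul R A ι (singleDiff R i₀ a i) = 0 := by
  rw [singleDiff, map_sub, iteratedMul_singleAlgHom, iteratedMul_singleAlgHom, sub_self]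

lemma ker_iteratedMul_le {s : Set A} (hs : Algebra.adjoin R s = ⊤) (i₀ : ι)
    {I : Ideal (⨂[R] _ : ι, A)} (hI : ∀ a ∈ s, ∀ i, singleDiff R i₀ a i ∈ I) :
    RingHom.ker (iteratedMul R A ι) ≤ I := by
  let π := Ideal.Quotient.mkₐ R I
  have hπ_single (i : ι) : π.comp (singleAlgHom i) = π.comp (singleAlgHom i₀) :=
    AlgHom.ext_of_adjoin_eq_top hs fun a ha => Ideal.Quotient.eq.mpr (hI a ha i)
  have hπ : π = (π.comp (singleAlgHom i₀)).comp (iteratedMul R A ι) := by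
    refine algHom_ext fun i => AlgHom.ext fun a => ?_
    calc π (singleAlgHom i a) = π (singleAlgHom i₀ a) := DFunLike.congr_fun (hπ_single i) a
      _ = π (singleAlgHom i₀ (iteratedMul R A ι (singleAlgHom i a))) := by
        rw [iteratedMul_singleAlgHom]
  intro x hx
  rw [← Ideal.Quotient.eq_zero_iff_mem]
  calc π x = π (singleAlgHom i₀ (iteratedMul R A ι x)) := DFunLike.congr_fun hπ x
    _ = 0 := by rw [RingHom.mem_ker.mp hx, map_zero, map_zero]

lemma ker_iteratedMul_le_span_singleDiff {a : A} (ha : Algebra.adjoin R {a} = ⊤) (i₀ : ι) :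
    RingHom.ker (iteratedMul R A ι) ≤
      Ideal.span (Set.range fun i : {i // i ≠ i₀} => singleDiff R i₀ a i) := by
  refine ker_iteratedMul_le ha i₀ ?_
  rintro _ rfl i
  obtain rfl | hi := eq_or_ne i i₀
  · simp only [singleDiff, sub_self, zero_mem]
  · exact Ideal.subset_span ⟨⟨i, hi⟩, rfl⟩

omit [Fintype ι] in
lemma singleDiff_pow_char_pow_eq_zero (p : ℕ) [ExpChar (⨂[R] _ : ι, A) p] {m : ℕ} {a : A}
    (ha : a ^ p ^ m = 0) (i₀ i : ι) : singleDiff R i₀ a i ^ p ^ m = 0 := by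
  rw [singleDiff, sub_pow_expChar_pow, ← map_pow, ← map_pow, ha, map_zero, map_zero, sub_zero]

lemma singleAlgHom_pow_mul_prod_singleDiff_pow {a : A} {d : ℕ} (ha : a ^ (d + 1) = 0) (i₀ : ι) :
    singleAlgHom i₀ a ^ d * ∏ i : {i // i ≠ i₀}, singleDiff R i₀ a i ^ d =
      (tprod R fun _ => a ^ d : ⨂[R] _ : ι, A) := by
  have h_mul : singleAlgHom (R := R) (A := fun _ : ι => A) i₀ a ^ d * singleAlgHom i₀ a = 0 := by
    rw [← pow_succ, ← map_pow, ha, map_zero]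
  simp only [singleDiff]
  rw [mul_prod_sub_pow_of_mul_eq_zero h_mul, tprod_eq_prod_singleAlgHom]
  simp only [map_pow]
  rw [Fintype.prod_eq_mul_prod_subtype_ne _ i₀]

lemma mul_card_ne_mem_upperBounds_zeroDivisorCupLengths (p : ℕ) [ExpChar (⨂[R] _ : ι, A) p] {m : ℕ}
    {a : A} (h_gen : Algebra.adjoin R {a} = ⊤) (ha : a ^ p ^ m = 0) (i₀ : ι) :
    (p ^ m - 1) * Fintype.card {i // i ≠ i₀} ∈ upperBounds (zeroDivisorCupLengths R A ι) := by
  rintro t ⟨z, hz, hprod⟩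
  by_contra! ht
  refine hprod (prod_eq_zero_of_mem_span_range
    (fun i : {i // i ≠ i₀} => singleDiff_pow_char_pow_eq_zero p ha i₀ i)
    (fun k => ker_iteratedMul_le_span_singleDiff h_gen i₀ (hz k)) ?_)
  rwa [mul_comm, Fintype.card_fin]

end SingleDiff

section PowerBasis

variable {R A ι : Type*} [CommRing R] [CommRing A] [Algebra R A]

lemma tprod_gen_pow_ne_zero [Nontrivial R] [Finite ι] (pb : PowerBasis R A) (e : ι → Fin pb.dim) :
    tprod R (fun i => pb.gen ^ (e i : ℕ)) ≠ 0 := by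
  have h_basis := (Basis.piTensorProduct fun _ : ι => pb.basis).ne_zero e
  simpa only [Basis.piTensorProduct_apply, PowerBasis.coe_basis] using h_basis

variable [Fintype ι] [DecidableEq ι]

lemma prod_singleDiff_gen_pow_ne_zero [Nontrivial R] {pb : PowerBasis R A} {d : ℕ}
    (hdim : pb.dim = d + 1) (hgen : pb.gen ^ (d + 1) = 0) (i₀ : ι) :
    ∏ i : {i // i ≠ i₀}, singleDiff R i₀ pb.gen i ^ d ≠ 0 := by
  intro hprod
  refine tprod_gen_pow_ne_zero pb (fun _ : ι => ⟨d, by lia⟩) ?_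
  rw [← singleAlgHom_pow_mul_prod_singleDiff_pow hgen i₀, hprod, mul_zero]

lemma mul_card_ne_mem_zeroDivisorCupLengths [Nontrivial R] {pb : PowerBasis R A} {d : ℕ}
    (hdim : pb.dim = d + 1) (hgen : pb.gen ^ (d + 1) = 0) (i₀ : ι) :
    d * Fintype.card {i // i ≠ i₀} ∈ zeroDivisorCupLengths R A ι := by
  have hcard : Fintype.card (Fin d × {i // i ≠ i₀}) = d * Fintype.card {i // i ≠ i₀} := by
    rw [Fintype.card_prod, Fintype.card_fin]
  rw [← hcard]
  refine card_mem_zeroDivisorCupLengths (z := fun k => singleDiff R i₀ pb.gen k.2)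
    (fun k => iteratedMul_singleDiff i₀ pb.gen k.2) ?_
  simp only [Fintype.prod_prod_type, Finset.prod_const, Finset.card_univ, Fintype.card_fin]
  rw [← Finset.prod_pow]
  exact prod_singleDiff_gen_pow_ne_zero hdim hgen i₀

omit [DecidableEq ι] in
theorem stmt18_general [Nonempty ι] {p m : ℕ} [Fact p.Prime] [CharP R p]
    {pb : PowerBasis R A} (hdim : pb.dim = p ^ m) (hgen : pb.gen ^ p ^ m = 0) :
    IsGreatest (zeroDivisorCupLengths R A ι) ((p ^ m - 1) * (Fintype.card ι - 1)) := by
  classical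
  obtain ⟨i₀⟩ := ‹Nonempty ι›
  have : Nontrivial R := CharP.nontrivial_of_char_ne_one (Fact.out : p.Prime).ne_one
  have hq_pos : 0 < p ^ m := pow_pos (Fact.out : p.Prime).pos m
  have hq : p ^ m - 1 + 1 = p ^ m := Nat.sub_add_cancel hq_pos
  have : Nontrivial A := nontrivial_of_ne _ _ (pb.basis.ne_zero ⟨0, hdim ▸ hq_pos⟩)
  have : Module.Free R A := .of_basis pb.basis
  have : ExpChar (⨂[R] _ : ι, A) p :=
    expChar_of_injective_algebraMap (algebraMap_piTensorProduct_injective R A ι) p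
  rw [← Set.card_ne_eq i₀]
  exact ⟨mul_card_ne_mem_zeroDivisorCupLengths (by rw [hdim, hq]) (by rw [hq, hgen]) i₀,
    mul_card_ne_mem_upperBounds_zeroDivisorCupLengths p pb.adjoin_gen_eq_top hgen i₀⟩

end PowerBasis

section TruncatedPolynomial

variable (R : Type*) [CommRing R] (n : ℕ)

/-- The basis `1, t, …, t ^ (n - 1)` of the truncated polynomial algebra `R[t]/(t ^ n)`. -/
noncomputable def truncatedPolynomialPowerBasis :
    PowerBasis R (Polynomial R ⧸ Ideal.span {(Polynomial.X : Polynomial R) ^ n}) :=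
  AdjoinRoot.powerBasis' (Polynomial.monic_X_pow n)

lemma truncatedPolynomialPowerBasis_dim [Nontrivial R] :
    (truncatedPolynomialPowerBasis R n).dim = n :=
  Polynomial.natDegree_X_pow n

lemma truncatedPolynomialPowerBasis_gen_pow : (truncatedPolynomialPowerBasis R n).gen ^ n = 0 :=
  Ideal.Quotient.eq_zero_iff_mem.mpr (Ideal.mem_span_singleton_self _)

end TruncatedPolynomial

lemma muRP3_apply {s : ℕ} (x : ⨂[ZMod 2] _ : Fin s, CohRP3) :
    muRP3 s x = iteratedMul (ZMod 2) CohRP3 (Fin s) x :=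
  lift_mkPiAlgebraFin_apply x

/-- For `s ≥ 2`, the `s`-th zero-divisor cup-length of `H^*(ℝP³; ℤ/2)`
equals `3(s-1)`: there exist `3(s-1)` elements of the kernel of the `s`-fold multiplication
map `H^*(ℝP³; ℤ/2)^{⊗s} → H^*(ℝP³; ℤ/2)` with nonzero product, and no larger such family
exists.  (Note that over `ℤ/2` the Koszul-signed multiplication on the tensor power agrees
with the ordinary one.) -/
theorem stmt18 (s : ℕ) (hs : 2 ≤ s) :
    (∃ z : Fin (3 * (s - 1)) → ⨂[ZMod 2] _ : Fin s, CohRP3,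
        (∀ k, muRP3 s (z k) = 0) ∧ (∏ k, z k) ≠ 0) ∧
      ∀ t : ℕ,
        (∃ z : Fin t → ⨂[ZMod 2] _ : Fin s, CohRP3,
          (∀ k, muRP3 s (z k) = 0) ∧ (∏ k, z k) ≠ 0) → t ≤ 3 * (s - 1) := by
  have : NeZero s := ⟨by lia⟩
  simpa [IsGreatest, upperBounds, zeroDivisorCupLengths, muRP3_apply] using
    stmt18_general (ι := Fin s) (p := 2) (m := 2) (truncatedPolynomialPowerBasis_dim (ZMod 2) 4)
      (truncatedPolynomialPowerBasis_gen_pow (ZMod 2) 4)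
end
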